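/- arXiv:2512.15320 — 6 statements merged into one kernel-verified Lean document; each statement's English description precedes it below -/
import Mathlib

section
/- Let f, g : (0,∞) → [0,∞) be nonincreasing functions such that ∫₀ᵗ f(x) dx ≥ ∫₀ᵗ g(x) dx for every t > 0 and ∫₀^∞ f(x) dx = ∫₀^∞ g(x) dx < ∞. Then for every p ≥ 1 one has ∫₀^∞ f(x)^p dx ≥ ∫₀^∞ g(x)^p dx. -/
open MeasureTheory Set

lemma aux_set (F G : ℝ → ENNReal)
    (hle : ∀ t : ℝ, 0 < t → ∫⁻ x in Ioc (0:ℝ) t, G x ≤ ∫⁻ x in Ioc (0:ℝ) t, F x)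
    (heq : ∫⁻ x in Ioi (0:ℝ), G x ≤ ∫⁻ x in Ioi (0:ℝ), F x)
    (S : Set ℝ) (hS0 : S ⊆ Ioi 0) (hS : ∀ x ∈ S, ∀ y, 0 < y → y ≤ x → y ∈ S) :
    ∫⁻ x in S, G x ≤ ∫⁻ x in S, F x := by
  by_cases hb : BddAbove S
  · rcases S.eq_empty_or_nonempty with rfl | hne
    · simp
    · obtain ⟨a, ha⟩ := hne
      have ht : 0 < sSup S := lt_of_lt_of_le (hS0 ha) (le_csSup hb ha)
      have hae : S =ᵐ[volume] Ioc (0:ℝ) (sSup S) := by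
        have h1 : Ioo (0:ℝ) (sSup S) ⊆ S := by
          intro y hy
          obtain ⟨x, hx, hyx⟩ := exists_lt_of_lt_csSup ⟨a, ha⟩ hy.2
          exact hS x hx y hy.1 hyx.le
        have h2 : S ⊆ Ioc (0:ℝ) (sSup S) := fun y hy => ⟨hS0 hy, le_csSup hb hy⟩
        refine Filter.EventuallyLE.antisymm h2.eventuallyLE ?_
        exact (Ioo_ae_eq_Ioc (μ := volume)).symm.le.trans h1.eventuallyLE
      rw [setLIntegral_congr hae, setLIntegral_congr hae]
      exact hle _ ht
  · have : S = Ioi 0 := by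
      refine subset_antisymm hS0 fun y hy => ?_
      rw [not_bddAbove_iff] at hb
      obtain ⟨x, hx, hyx⟩ := hb y
      exact hS x hx y hy hyx.le
    rw [this]; exact heq

lemma aux_hardy (F G : ℝ → ENNReal) (hF : Measurable F) (hG : Measurable G)
    (hle : ∀ t : ℝ, 0 < t → ∫⁻ x in Ioc (0:ℝ) t, G x ≤ ∫⁻ x in Ioc (0:ℝ) t, F x)
    (heq : ∫⁻ x in Ioi (0:ℝ), G x ≤ ∫⁻ x in Ioi (0:ℝ), F x)
    (φ : ℝ → ℝ) (hφ : Measurable φ) (h0 : ∀ x ∈ Ioi (0:ℝ), 0 ≤ φ x)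
    (hanti : AntitoneOn φ (Ioi 0)) :
    ∫⁻ x in Ioi (0:ℝ), G x * ENNReal.ofReal (φ x) ≤
      ∫⁻ x in Ioi (0:ℝ), F x * ENNReal.ofReal (φ x) := by
  have key : ∀ H : ℝ → ENNReal, Measurable H →
      ∫⁻ x in Ioi (0:ℝ), H x * ENNReal.ofReal (φ x) =
        ∫⁻ s in Ioi (0:ℝ), ∫⁻ x in {x | s < φ x} ∩ Ioi 0, H x := by
    intro H hH
    have e1 := lintegral_withDensity_eq_lintegral_mul (volume.restrict (Ioi (0:ℝ))) hH
      (g := fun x => ENNReal.ofReal (φ x)) hφ.ennreal_ofReal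
    simp only [Pi.mul_apply] at e1
    rw [← e1, lintegral_eq_lintegral_meas_lt _ _ hφ.aemeasurable]
    · refine lintegral_congr fun s => ?_
      have hm : MeasurableSet {x | s < φ x} := measurableSet_lt measurable_const hφ
      rw [withDensity_apply _ hm, Measure.restrict_restrict hm]
    · refine (withDensity_absolutelyContinuous _ _).ae_le ?_
      exact (ae_restrict_mem measurableSet_Ioi).mono h0
  rw [key G hG, key F hF]
  refine lintegral_mono fun s => ?_
  refine aux_set F G hle heq _ inter_subset_right ?_
  rintro x ⟨hx, hx0⟩ y hy hyx
  exact ⟨lt_of_lt_of_le hx (hanti hy hx0 hyx), hy⟩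

/-- Karamata-type inequality, case `p ≥ 1`: if `f, g : (0,∞) → [0,∞)` are nonincreasing,
`∫₀ᵗ f ≥ ∫₀ᵗ g` for all `t > 0`, and `∫₀^∞ f = ∫₀^∞ g < ∞`, then
`∫₀^∞ f^p ≥ ∫₀^∞ g^p` for every `p ≥ 1`. -/
theorem stmt_0 (f g : ℝ → ℝ)
    (hfm : Measurable f) (hgm : Measurable g)
    (hfpos : ∀ x ∈ Ioi (0:ℝ), 0 ≤ f x) (hgpos : ∀ x ∈ Ioi (0:ℝ), 0 ≤ g x)
    (hfanti : AntitoneOn f (Ioi 0)) (hganti : AntitoneOn g (Ioi 0))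
    (hle : ∀ t : ℝ, 0 < t →
      ∫⁻ x in Ioc (0:ℝ) t, ENNReal.ofReal (g x) ≤
        ∫⁻ x in Ioc (0:ℝ) t, ENNReal.ofReal (f x))
    (heq : ∫⁻ x in Ioi (0:ℝ), ENNReal.ofReal (f x) =
        ∫⁻ x in Ioi (0:ℝ), ENNReal.ofReal (g x))
    (hfin : ∫⁻ x in Ioi (0:ℝ), ENNReal.ofReal (f x) < ⊤)
    (p : ℝ) (hp : 1 ≤ p) :
    ∫⁻ x in Ioi (0:ℝ), ENNReal.ofReal (g x) ^ p ≤
      ∫⁻ x in Ioi (0:ℝ), ENNReal.ofReal (f x) ^ p := by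
  rcases hp.eq_or_lt with rfl | hp1
  · simpa using heq.ge
  have hp0 : 0 < p := by linarith
  have hpm : 0 < p - 1 := by linarith
  -- truncations
  let h : ℕ → ℝ → ℝ := fun n => (Iic (n:ℝ)).indicator fun x => min (g x) n
  have hhm : ∀ n, Measurable (h n) := fun n =>
    (hgm.min measurable_const).indicator measurableSet_Iic
  have hh0 : ∀ n, ∀ x ∈ Ioi (0:ℝ), 0 ≤ h n x := fun n x hx =>
    indicator_apply_nonneg fun _ => le_min (hgpos x hx) n.cast_nonneg
  have hhg : ∀ n, ∀ x ∈ Ioi (0:ℝ), h n x ≤ g x := fun n x hx =>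
    indicator_apply_le' (fun _ => min_le_left _ _) (fun _ => hgpos x hx)
  have hanti : ∀ n, AntitoneOn (h n) (Ioi 0) := by
    intro n x hx y hy hxy
    by_cases hyn : y ≤ n
    · have hxn : x ≤ n := hxy.trans hyn
      simp only [h, indicator, mem_Iic, hyn, hxn, if_true]
      exact min_le_min_right _ (hganti hx hy hxy)
    · have : h n y = 0 := by simp [h, indicator, hyn]
      rw [this]; exact hh0 n x hx
  have hmono : ∀ x ∈ Ioi (0:ℝ), Monotone fun n => h n x := by
    intro x hx m n hmn
    have hmn' : (m:ℝ) ≤ n := by exact_mod_cast hmn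
    by_cases hxm : x ≤ m
    · have hxn : x ≤ n := hxm.trans hmn'
      simp only [h, indicator, mem_Iic, hxm, hxn, if_true]
      exact min_le_min_left _ hmn'
    · have : h m x = 0 := by simp [h, indicator, hxm]
      simp only [this]; exact hh0 n x hx
  have hpow : ∀ n, ∫⁻ x in Ioi (0:ℝ), ENNReal.ofReal (h n x) ^ p ≠ ⊤ := by
    intro n
    have hb : ∀ x, ENNReal.ofReal (h n x) ^ p ≤
        (Iic (n:ℝ)).indicator (fun _ => ENNReal.ofReal n ^ p) x := by
      intro x
      by_cases hx : x ≤ n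
      · simp only [h, indicator, mem_Iic, hx, if_true]
        exact ENNReal.rpow_le_rpow (ENNReal.ofReal_le_ofReal (min_le_right _ _)) hp0.le
      · simp [h, indicator, hx, hp0]
    refine ne_top_of_le_ne_top ?_ (lintegral_mono hb)
    rw [lintegral_indicator measurableSet_Iic, setLIntegral_const,
      Measure.restrict_apply measurableSet_Iic, inter_comm, Ioi_inter_Iic]
    exact ENNReal.mul_ne_top (ENNReal.rpow_ne_top_of_nonneg hp0.le ENNReal.ofReal_ne_top)
      (by simp)
  have main : ∀ n, ∫⁻ x in Ioi (0:ℝ), ENNReal.ofReal (h n x) ^ p ≤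
      ∫⁻ x in Ioi (0:ℝ), ENNReal.ofReal (f x) ^ p := by
    intro n
    have hpq : p.HolderConjugate (p / (p - 1)) := Real.HolderConjugate.conjExponent hp1
    have hardy := aux_hardy (fun x => ENNReal.ofReal (f x)) (fun x => ENNReal.ofReal (g x))
      hfm.ennreal_ofReal hgm.ennreal_ofReal hle heq.ge (fun x => h n x ^ (p - 1))
      ((hhm n).pow_const _) (fun x hx => Real.rpow_nonneg (hh0 n x hx) _)
      (fun x hx y hy hxy => Real.rpow_le_rpow (hh0 n y hy) (hanti n hx hy hxy) hpm.le)
    have hold := ENNReal.lintegral_mul_le_Lp_mul_Lq (volume.restrict (Ioi (0:ℝ))) hpq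
      (f := fun x => ENNReal.ofReal (f x)) (g := fun x => ENNReal.ofReal (h n x ^ (p - 1)))
      hfm.ennreal_ofReal.aemeasurable ((hhm n).pow_const _).ennreal_ofReal.aemeasurable
    have e : ∫⁻ x in Ioi (0:ℝ), ENNReal.ofReal (h n x ^ (p - 1)) ^ (p / (p - 1)) =
        ∫⁻ x in Ioi (0:ℝ), ENNReal.ofReal (h n x) ^ p := by
      refine setLIntegral_congr_fun measurableSet_Ioi fun x hx => ?_
      rw [← ENNReal.ofReal_rpow_of_nonneg (hh0 n x hx) hpm.le, ← ENNReal.rpow_mul]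
      congr 1
      field_simp
    have lo : ∫⁻ x in Ioi (0:ℝ), ENNReal.ofReal (h n x) ^ p ≤
        ∫⁻ x in Ioi (0:ℝ), ENNReal.ofReal (g x) * ENNReal.ofReal (h n x ^ (p - 1)) := by
      refine setLIntegral_mono' measurableSet_Ioi fun x hx => ?_
      rw [← ENNReal.ofReal_rpow_of_nonneg (hh0 n x hx) hpm.le]
      calc ENNReal.ofReal (h n x) ^ p = ENNReal.ofReal (h n x) ^ (1 + (p - 1)) := by
            congr 1; ring
        _ = ENNReal.ofReal (h n x) * ENNReal.ofReal (h n x) ^ (p - 1) := by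
            rw [ENNReal.rpow_add_of_nonneg _ _ zero_le_one hpm.le, ENNReal.rpow_one]
        _ ≤ _ := by gcongr; exact hhg n x hx
    simp only [Pi.mul_apply] at hold
    rw [e] at hold
    have fin := lo.trans (hardy.trans hold)
    have hI := hpow n
    generalize (∫⁻ x in Ioi (0:ℝ), ENNReal.ofReal (h n x) ^ p) = I at fin hI ⊢
    generalize (∫⁻ x in Ioi (0:ℝ), ENNReal.ofReal (f x) ^ p) = J at fin ⊢
    by_cases hI0 : I = 0
    · simp [hI0]
    have hs : I = I ^ (1 / p) * I ^ (1 / (p / (p - 1))) := by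
      rw [← ENNReal.rpow_add _ _ hI0 hI]
      have : 1 / p + 1 / (p / (p - 1)) = 1 := by field_simp; ring
      rw [this, ENNReal.rpow_one]
    have hc0 : I ^ (1 / (p / (p - 1))) ≠ 0 := by
      simp [ENNReal.rpow_eq_zero_iff, hI0, hI]
    have hct : I ^ (1 / (p / (p - 1))) ≠ ⊤ := 
      ENNReal.rpow_ne_top_of_nonneg (by positivity) hI
    nth_rewrite 1 [hs] at fin
    have := (ENNReal.mul_le_mul_iff_left hc0 hct).1 fin
    exact (ENNReal.rpow_le_rpow_iff (by positivity)).1 this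
  have hsup : ∫⁻ x in Ioi (0:ℝ), ENNReal.ofReal (g x) ^ p =
      ⨆ n, ∫⁻ x in Ioi (0:ℝ), ENNReal.ofReal (h n x) ^ p := by
    rw [← lintegral_iSup' (fun n => ((hhm n).ennreal_ofReal.pow_const p).aemeasurable)]
    · refine setLIntegral_congr_fun measurableSet_Ioi fun x hx => ?_
      apply le_antisymm
      · obtain ⟨n, hn⟩ := exists_nat_ge (max x (g x))
        refine le_iSup_of_le n ?_
        have h1 : x ≤ n := (le_max_left _ _).trans hn
        have h2 : g x ≤ n := (le_max_right _ _).trans hn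
        simp [h, indicator, h1, h2]
      · exact iSup_le fun n => ENNReal.rpow_le_rpow (ENNReal.ofReal_le_ofReal (hhg n x hx)) hp0.le
    · filter_upwards [ae_restrict_mem measurableSet_Ioi] with x hx m n hmn
      exact ENNReal.rpow_le_rpow (ENNReal.ofReal_le_ofReal (hmono x hx hmn)) hp0.le
  rw [hsup]
  exact iSup_le main
end

section
/- Let f, g : (0,∞) → [0,∞) be nonincreasing functions such that ∫₀ᵗ f(x) dx ≥ ∫₀ᵗ g(x) dx for every t > 0 and ∫₀^∞ f(x) dx = ∫₀^∞ g(x) dx < ∞. Then for every p with 0 < p ≤ 1 one has ∫₀^∞ f(x)^p dx ≤ ∫₀^∞ g(x)^p dx. -/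
open MeasureTheory Set

lemma layer_aux (p : ℝ) (hp0 : 0 < p) (hp1 : p < 1) (y : ℝ) (hy : 0 ≤ y) :
    ∫⁻ k in Ioi (0:ℝ), ENNReal.ofReal (k ^ (p-2)) * ENNReal.ofReal (min y k) =
      ENNReal.ofReal (1/p + 1/(1-p)) * ENNReal.ofReal y ^ p := by
  rcases hy.eq_or_lt with rfl | hy
  · rw [ENNReal.ofReal_zero, ENNReal.zero_rpow_of_pos hp0, mul_zero]
    rw [setLIntegral_congr_fun (g := fun _ => 0) measurableSet_Ioi]
    · simp
    · intro k hk
      have hk : 0 < k := hk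
      simp [min_eq_left hk.le]
  · have h1 : ∫⁻ k in Ioc (0:ℝ) y, ENNReal.ofReal (k ^ (p-2)) * ENNReal.ofReal (min y k)
        = ENNReal.ofReal (y ^ p / p) := by
      have hi : IntervalIntegrable (fun k : ℝ => k ^ (p-1)) volume 0 y :=
        intervalIntegral.intervalIntegrable_rpow' (by linarith)
      have hv : ∫ k in Ioc (0:ℝ) y, k ^ (p-1) = y ^ p / p := by
        rw [← intervalIntegral.integral_of_le hy.le, integral_rpow (Or.inl (by linarith))]
        simp [Real.zero_rpow hp0.ne']
      rw [← hv, ofReal_integral_eq_lintegral_ofReal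
        ((intervalIntegrable_iff_integrableOn_Ioc_of_le hy.le).1 hi)]
      · refine setLIntegral_congr_fun measurableSet_Ioc ?_
        intro k hk
        have h0 : 0 < k := hk.1
        simp only
        rw [min_eq_right hk.2, ← ENNReal.ofReal_mul (by positivity)]
        congr 1
        rw [← Real.rpow_add_one h0.ne']
        congr 1; ring
      · filter_upwards [ae_restrict_mem measurableSet_Ioc] with k hk
        exact Real.rpow_nonneg hk.1.le _
    have h2 : ∫⁻ k in Ioi y, ENNReal.ofReal (k ^ (p-2)) * ENNReal.ofReal (min y k)
        = ENNReal.ofReal (y ^ p / (1-p)) := by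
      have hi : IntegrableOn (fun k : ℝ => k ^ (p-2)) (Ioi y) :=
        integrableOn_Ioi_rpow_of_lt (by linarith) hy
      have hv : (∫ k in Ioi y, k ^ (p-2)) * y = y ^ p / (1-p) := by
        rw [integral_Ioi_rpow_of_lt (by linarith) hy]
        have : y ^ p = y ^ (p - 2 + 1) * y := by
          rw [← Real.rpow_add_one hy.ne']; congr 1; ring
        rw [this, show p - 2 + 1 = -(1-p) by ring]
        have : 1 - p ≠ 0 := by linarith
        field_simp
      rw [← hv, ENNReal.ofReal_mul' hy.le, ofReal_integral_eq_lintegral_ofReal hi,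
        ← lintegral_mul_const _ (by fun_prop)]
      · refine setLIntegral_congr_fun measurableSet_Ioi ?_
        intro k hk
        have hk : y < k := hk
        simp only [min_eq_left hk.le]
      · filter_upwards [ae_restrict_mem measurableSet_Ioi] with k hk
        exact Real.rpow_nonneg (hy.le.trans (le_of_lt hk)) _
    rw [← Ioc_union_Ioi_eq_Ioi hy.le, lintegral_union measurableSet_Ioi
      (Ioc_disjoint_Ioi le_rfl), h1, h2, ENNReal.ofReal_rpow_of_pos hy]
    have : 0 < 1 - p := by linarith
    rw [← ENNReal.ofReal_add (by positivity) (by positivity),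
      ← ENNReal.ofReal_mul (by positivity)]
    congr 1; ring

lemma layer_swap (f : ℝ → ℝ) (hfm : Measurable f) (hfpos : ∀ x ∈ Ioi (0:ℝ), 0 ≤ f x)
    (p : ℝ) (hp0 : 0 < p) (hp1 : p < 1) :
    ENNReal.ofReal (1/p + 1/(1-p)) * ∫⁻ x in Ioi (0:ℝ), ENNReal.ofReal (f x) ^ p =
      ∫⁻ k in Ioi (0:ℝ), ENNReal.ofReal (k ^ (p-2)) *
        ∫⁻ x in Ioi (0:ℝ), ENNReal.ofReal (min (f x) k) := by
  rw [← lintegral_const_mul _ (by fun_prop)]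
  rw [setLIntegral_congr_fun (g := fun x => ∫⁻ k in Ioi (0:ℝ),
    ENNReal.ofReal (k ^ (p-2)) * ENNReal.ofReal (min (f x) k)) measurableSet_Ioi]
  · rw [lintegral_lintegral_swap]
    · refine lintegral_congr fun k => ?_
      rw [lintegral_const_mul _ (by fun_prop)]
    · unfold Function.uncurry
      fun_prop
  · intro x hx
    exact (layer_aux p hp0 hp1 (f x) (hfpos x hx)).symm

lemma trunc_le (f g : ℝ → ℝ)
    (hganti : AntitoneOn g (Ioi 0))
    (hle : ∀ t : ℝ, 0 < t →
      ∫⁻ x in Ioc (0:ℝ) t, ENNReal.ofReal (g x) ≤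
        ∫⁻ x in Ioc (0:ℝ) t, ENNReal.ofReal (f x))
    (heq : ∫⁻ x in Ioi (0:ℝ), ENNReal.ofReal (f x) =
        ∫⁻ x in Ioi (0:ℝ), ENNReal.ofReal (g x))
    (hfin : ∫⁻ x in Ioi (0:ℝ), ENNReal.ofReal (f x) < ⊤) (k : ℝ) (hk : 0 < k) :
    ∫⁻ x in Ioi (0:ℝ), ENNReal.ofReal (min (f x) k) ≤
      ∫⁻ x in Ioi (0:ℝ), ENNReal.ofReal (min (g x) k) := by
  set S : Set ℝ := {x | 0 < x ∧ k < g x} with hS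
  have hbdd : BddAbove S := by
    by_contra hb
    rw [not_bddAbove_iff] at hb
    have hall : ∀ x ∈ Ioi (0:ℝ), ENNReal.ofReal k ≤ ENNReal.ofReal (g x) := by
      intro x hx
      obtain ⟨y, hy, hxy⟩ := hb x
      exact ENNReal.ofReal_le_ofReal (hy.2.le.trans (hganti hx hy.1 hxy.le))
    have := setLIntegral_mono' (μ := volume) measurableSet_Ioi hall
    rw [← heq] at this
    have h2 := this.trans_lt hfin
    simp [ENNReal.mul_top, hk] at h2
  set s := sSup S with hs
  have hs0 : 0 ≤ s := Real.sSup_nonneg fun x hx => hx.1.le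
  have hgt : ∀ x ∈ Ioi s, g x ≤ k := by
    intro x hx
    have hx : s < x := hx
    by_contra h
    exact absurd (le_csSup hbdd (show x ∈ S from ⟨hs0.trans_lt hx, not_le.1 h⟩)) (not_le.2 hx)
  have hlt : ∀ x ∈ Ioo 0 s, k < g x := by
    intro x hx
    have hne : S.Nonempty := by
      by_contra h
      rw [not_nonempty_iff_eq_empty] at h
      have : s = 0 := by rw [hs, h, Real.sSup_empty]
      linarith [hx.1, hx.2]
    obtain ⟨y, hy, hxy⟩ := exists_lt_of_lt_csSup hne hx.2
    exact hy.2.trans_le (hganti hx.1 hy.1 hxy.le)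
  have hsplit : ∀ h : ℝ → ENNReal, ∫⁻ x in Ioi (0:ℝ), h x =
      (∫⁻ x in Ioc 0 s, h x) + ∫⁻ x in Ioi s, h x := by
    intro h
    rw [← Ioc_union_Ioi_eq_Ioi hs0, lintegral_union measurableSet_Ioi
      (Ioc_disjoint_Ioi le_rfl)]
  have htail : ∫⁻ x in Ioi s, ENNReal.ofReal (f x) ≤ ∫⁻ x in Ioi s, ENNReal.ofReal (g x) := by
    have hle' : ∫⁻ x in Ioc (0:ℝ) s, ENNReal.ofReal (g x) ≤
        ∫⁻ x in Ioc (0:ℝ) s, ENNReal.ofReal (f x) := by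
      rcases hs0.eq_or_lt with h | h
      · rw [← h]; simp
      · exact hle s h
    have hf1 : ∫⁻ x in Ioc (0:ℝ) s, ENNReal.ofReal (f x) ≠ ⊤ :=
      ((lintegral_mono_set Ioc_subset_Ioi_self).trans_lt hfin).ne
    rw [hsplit, hsplit] at heq
    refine (ENNReal.add_le_add_iff_left hf1).1 ?_
    rw [heq]
    gcongr
  rw [hsplit, hsplit]
  refine add_le_add ?_ ?_
  · rw [setLIntegral_congr Ioo_ae_eq_Ioc.symm, setLIntegral_congr Ioo_ae_eq_Ioc.symm]
    refine setLIntegral_mono' measurableSet_Ioo fun x hx => ?_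
    rw [min_eq_right (hlt x hx).le]
    exact ENNReal.ofReal_le_ofReal (min_le_right _ _)
  · calc _ ≤ ∫⁻ x in Ioi s, ENNReal.ofReal (f x) :=
          lintegral_mono fun x => ENNReal.ofReal_le_ofReal (min_le_left _ _)
      _ ≤ _ := htail
      _ ≤ _ := setLIntegral_mono' measurableSet_Ioi fun x hx => by rw [min_eq_left (hgt x hx)]



/-- Karamata-type inequality, case `0 < p ≤ 1`: if `f, g : (0,∞) → [0,∞)` are nonincreasing,
`∫₀ᵗ f ≥ ∫₀ᵗ g` for all `t > 0`, and `∫₀^∞ f = ∫₀^∞ g < ∞`, then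
`∫₀^∞ f^p ≤ ∫₀^∞ g^p` for every `0 < p ≤ 1`. -/
theorem stmt_1 (f g : ℝ → ℝ)
    (hfm : Measurable f) (hgm : Measurable g)
    (hfpos : ∀ x ∈ Ioi (0:ℝ), 0 ≤ f x) (hgpos : ∀ x ∈ Ioi (0:ℝ), 0 ≤ g x)
    (hfanti : AntitoneOn f (Ioi 0)) (hganti : AntitoneOn g (Ioi 0))
    (hle : ∀ t : ℝ, 0 < t →
      ∫⁻ x in Ioc (0:ℝ) t, ENNReal.ofReal (g x) ≤
        ∫⁻ x in Ioc (0:ℝ) t, ENNReal.ofReal (f x))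
    (heq : ∫⁻ x in Ioi (0:ℝ), ENNReal.ofReal (f x) =
        ∫⁻ x in Ioi (0:ℝ), ENNReal.ofReal (g x))
    (hfin : ∫⁻ x in Ioi (0:ℝ), ENNReal.ofReal (f x) < ⊤)
    (p : ℝ) (hp0 : 0 < p) (hp1 : p ≤ 1) :
    ∫⁻ x in Ioi (0:ℝ), ENNReal.ofReal (f x) ^ p ≤
      ∫⁻ x in Ioi (0:ℝ), ENNReal.ofReal (g x) ^ p := by

  rcases hp1.eq_or_lt with rfl | hp1
  · simpa using heq.le
  · have hC : 0 < 1/p + 1/(1-p) := by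
      have : 0 < 1 - p := by linarith
      positivity
    refine (ENNReal.mul_le_mul_iff_right (a := ENNReal.ofReal (1/p + 1/(1-p)))
      (by simpa using hC) ENNReal.ofReal_ne_top).1 ?_
    rw [layer_swap f hfm hfpos p hp0 hp1, layer_swap g hgm hgpos p hp0 hp1]
    refine setLIntegral_mono' measurableSet_Ioi fun k hk => ?_
    refine mul_le_mul_right ?_ _
    exact trunc_le f g hganti hle heq hfin k hk
end

section
/- Let 0 < p ≤ q < ∞ and let f be a measurable function on [0,1]². Then (∫₀¹(∫₀¹ |f(x₁,x₂)|^q dx₂)^{p/q} dx₁)^{1/p} ≥ (∫₀¹(∫₀¹ (f^{*₁}(t₁,x₂))^q dx₂)^{p/q} dt₁)^{1/p}. -/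
open MeasureTheory Set

/-- The decreasing rearrangement on `[0,1]` (with Lebesgue measure) of a measurable
function `g`: `g^*(t) = inf {σ ≥ 0 : |{x ∈ [0,1] : |g(x)| > σ}| ≤ t}`. -/
noncomputable def rearr (g : ℝ → ℝ) (t : ℝ) : ℝ :=
  sInf {σ : ℝ | 0 ≤ σ ∧ volume {x ∈ Icc (0:ℝ) 1 | σ < |g x|} ≤ ENNReal.ofReal t}

/-- The rearrangement of `x₁ ↦ f (x₁, x₂)` in the first variable, the second one fixed. -/
noncomputable def rearr1 (f : ℝ → ℝ → ℝ) (t₁ x₂ : ℝ) : ℝ :=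
  rearr (fun x₁ => f x₁ x₂) t₁

noncomputable def RR (f : ℝ → ℝ → ℝ) (t x : ℝ) : ℝ := if 0 < t then rearr1 f t x else 0

lemma rearr_lt_iff (g : ℝ → ℝ) (hg : Measurable g) (t : ℝ) (ht : 0 < t) (a : ℝ) :
    rearr g t < a ↔ ∃ σ : ℚ, 0 ≤ (σ:ℝ) ∧ (σ:ℝ) < a ∧
      volume {x ∈ Icc (0:ℝ) 1 | (σ:ℝ) < |g x|} ≤ ENNReal.ofReal t := by
  have hbdd : BddBelow {σ : ℝ | 0 ≤ σ ∧ volume {x ∈ Icc (0:ℝ) 1 | σ < |g x|} ≤ ENNReal.ofReal t} :=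
    ⟨0, fun σ h => h.1⟩
  constructor
  · intro h
    have hne : {σ : ℝ | 0 ≤ σ ∧ volume {x ∈ Icc (0:ℝ) 1 | σ < |g x|} ≤ ENNReal.ofReal t}.Nonempty := by
      have hten := tendsto_measure_iInter_atTop (μ := volume)
        (s := fun n : ℕ => {x ∈ Icc (0:ℝ) 1 | (n:ℝ) < |g x|})
        (fun n => (measurableSet_Icc.inter (measurableSet_lt measurable_const
          (by fun_prop : Measurable fun x => |g x|))).nullMeasurableSet)
        (by
          intro m n hmn x hx
          refine ⟨hx.1, lt_of_le_of_lt ?_ hx.2⟩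
          exact_mod_cast hmn)
        ⟨0, ((measure_mono (fun x hx => hx.1)).trans_lt
          (measure_Icc_lt_top (a := (0:ℝ)) (b := 1))).ne⟩
      have hem : (⋂ n : ℕ, {x ∈ Icc (0:ℝ) 1 | (n:ℝ) < |g x|}) = ∅ := by
        ext x
        simp only [mem_iInter, mem_empty_iff_false, iff_false]
        intro h
        obtain ⟨n, hn⟩ := exists_nat_ge |g x|
        exact absurd (h n).2 (not_lt.2 hn)
      rw [hem, measure_empty] at hten
      obtain ⟨n, hn⟩ := (hten.eventually_lt_const (ENNReal.ofReal_pos.2 ht)).exists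
      exact ⟨n, n.cast_nonneg, hn.le⟩
    obtain ⟨σ, hσ, hlt⟩ := exists_lt_of_csInf_lt hne h
    obtain ⟨r, h1, h2⟩ := exists_rat_btwn hlt
    refine ⟨r, hσ.1.trans h1.le, h2, (measure_mono ?_).trans hσ.2⟩
    intro x hx
    exact ⟨hx.1, h1.trans hx.2⟩
  · rintro ⟨σ, h0, h1, h2⟩
    exact (csInf_le hbdd ⟨h0, h2⟩).trans_lt h1

lemma rearr_nonneg (g : ℝ → ℝ) (t : ℝ) : 0 ≤ rearr g t := Real.sInf_nonneg fun _ h => h.1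

lemma RR_nonneg (f : ℝ → ℝ → ℝ) (t x : ℝ) : 0 ≤ RR f t x := by
  unfold RR; split_ifs
  · exact rearr_nonneg _ _
  · exact le_rfl

lemma RR_meas (f : ℝ → ℝ → ℝ) (hf : Measurable (Function.uncurry f)) :
    Measurable (Function.uncurry (RR f)) := by
  have hD : ∀ s : ℝ, Measurable fun x₂ => volume {x ∈ Icc (0:ℝ) 1 | s < |f x x₂|} := by
    intro s
    have : MeasurableSet {z : ℝ × ℝ | z.1 ∈ Icc (0:ℝ) 1 ∧ s < |Function.uncurry f z|} :=
      (measurable_fst measurableSet_Icc).inter (measurableSet_lt measurable_const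
        (by fun_prop : Measurable fun z => |Function.uncurry f z|))
    exact measurable_measure_prodMk_right this
  have : Function.uncurry (RR f) = fun z : ℝ × ℝ => if 0 < z.1 then rearr1 f z.1 z.2 else 0 := rfl
  rw [this]
  apply measurable_of_Iio
  intro a
  have : (fun z : ℝ × ℝ => if 0 < z.1 then rearr1 f z.1 z.2 else 0) ⁻¹' Iio a =
      ({z | 0 < z.1} ∩ ⋃ σ : ℚ, {z | 0 ≤ (σ:ℝ) ∧ (σ:ℝ) < a ∧
        volume {x ∈ Icc (0:ℝ) 1 | (σ:ℝ) < |f x z.2|} ≤ ENNReal.ofReal z.1}) ∪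
      ({z | z.1 ≤ 0} ∩ {z | 0 < a}) := by
    ext ⟨t, x⟩
    by_cases ht : 0 < t
    · have := rearr_lt_iff (fun y => f y x) (by fun_prop) t ht a
      simpa [ht, rearr1, not_le.2 ht] using this
    · simp [ht, not_lt.1 ht]
  rw [this]
  refine MeasurableSet.union (MeasurableSet.inter (measurableSet_lt (by fun_prop) (by fun_prop)) ?_)
    (MeasurableSet.inter (measurableSet_le (by fun_prop) (by fun_prop)) (by measurability))
  refine MeasurableSet.iUnion fun σ => ?_
  refine MeasurableSet.inter (MeasurableSet.const _) (MeasurableSet.inter (MeasurableSet.const _) ?_)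
  exact measurableSet_le ((hD σ).comp measurable_snd) (by fun_prop)

lemma key1 (f : ℝ → ℝ → ℝ) (hf : Measurable (Function.uncurry f)) (q : ℝ) (hq : 0 < q)
    (A : Set ℝ) (hA : MeasurableSet A) (hA1 : A ⊆ Icc 0 1) (m : ℝ) (hm : 0 ≤ m)
    (hAm : volume (Icc (0:ℝ) 1 \ A) = ENNReal.ofReal m) (x : ℝ) :
    ∫⁻ t in Ioc m 1, ENNReal.ofReal (RR f t x) ^ q ≤ ∫⁻ y in A, ENNReal.ofReal |f y x| ^ q := by
  have hRm : Measurable fun t => RR f t x := (RR_meas f hf).comp measurable_prodMk_right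
  have hfm : Measurable fun y => f y x := hf.comp measurable_prodMk_right
  simp_rw [ENNReal.ofReal_rpow_of_nonneg (abs_nonneg _) hq.le,
    ENNReal.ofReal_rpow_of_nonneg (RR_nonneg _ _ _) hq.le]
  rw [lintegral_rpow_eq_lintegral_meas_lt_mul _ (Filter.Eventually.of_forall fun t => RR_nonneg _ _ _)
      hRm.aemeasurable hq,
    lintegral_rpow_eq_lintegral_meas_lt_mul _ (Filter.Eventually.of_forall fun t => abs_nonneg _)
      (by fun_prop) hq]
  gcongr ENNReal.ofReal q * ?_
  refine setLIntegral_mono' measurableSet_Ioi fun s hs => ?_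
  gcongr ?_ * _
  have hs : 0 < s := hs
  rw [Measure.restrict_apply (measurableSet_lt measurable_const hRm),
    Measure.restrict_apply (measurableSet_lt measurable_const (by fun_prop))]
  set D := volume {y ∈ Icc (0:ℝ) 1 | s < |f y x|} with hD
  have hDtop : D ≠ ⊤ := ((measure_mono (fun x hx => hx.1)).trans_lt
          (measure_Icc_lt_top (a := (0:ℝ)) (b := 1))).ne
  have h1 : {a | s < RR f a x} ∩ Ioc m 1 ⊆ Ioo m D.toReal := by
    rintro t ⟨h, h2⟩
    refine ⟨h2.1, ?_⟩
    have ht : 0 < t := hm.trans_lt h2.1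
    by_contra hc
    have : rearr1 f t x ≤ s := by
      refine csInf_le ⟨0, fun σ h => h.1⟩ ⟨hs.le, ?_⟩
      rw [← ENNReal.ofReal_toReal hDtop] at hD
      rw [← hD]
      exact ENNReal.ofReal_le_ofReal (not_lt.1 hc)
    simp only [mem_setOf_eq, RR, ht, if_true] at h
    linarith
  refine (measure_mono h1).trans ?_
  rw [Real.volume_Ioo, ENNReal.ofReal_sub _ hm, ENNReal.ofReal_toReal hDtop, ← hAm,
    tsub_le_iff_right]
  refine (measure_mono ?_).trans (measure_union_le _ _)
  rintro y ⟨h1, h2⟩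
  by_cases hy : y ∈ A
  · exact Or.inl ⟨h2, hy⟩
  · exact Or.inr ⟨h1, hy⟩

lemma key2 (f : ℝ → ℝ → ℝ) (hf : Measurable (Function.uncurry f)) (q : ℝ) (hq : 0 < q)
    (A : Set ℝ) (hA : MeasurableSet A) (hA1 : A ⊆ Icc 0 1) (m : ℝ) (hm : 0 ≤ m)
    (hAm : volume (Icc (0:ℝ) 1 \ A) = ENNReal.ofReal m) :
    ∫⁻ t in Ioc m 1, ∫⁻ x in Icc (0:ℝ) 1, ENNReal.ofReal (RR f t x) ^ q ≤
      ∫⁻ y in A, ∫⁻ x in Icc (0:ℝ) 1, ENNReal.ofReal |f y x| ^ q := by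
  have h1 : Measurable (Function.uncurry fun t x => ENNReal.ofReal (RR f t x) ^ q) :=
    (RR_meas f hf).ennreal_ofReal.pow_const q
  have h2 : Measurable (Function.uncurry fun t x => ENNReal.ofReal |f t x| ^ q) :=
    (hf.abs).ennreal_ofReal.pow_const q
  rw [lintegral_lintegral_swap h1.aemeasurable, lintegral_lintegral_swap h2.aemeasurable]
  exact lintegral_mono fun x => key1 f hf q hq A hA hA1 m hm hAm x

lemma key3 (G g : ℝ → ENNReal) (hg : Measurable g)
    (H : ∀ (A : Set ℝ) (m : ℝ), MeasurableSet A → A ⊆ Icc 0 1 → 0 ≤ m →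
      volume (Icc (0:ℝ) 1 \ A) = ENNReal.ofReal m → ∫⁻ t in Ioc m 1, G t ≤ ∫⁻ y in A, g y)
    (u : ENNReal) : ∫⁻ t in Ioc (0:ℝ) 1, min (G t) u ≤ ∫⁻ y in Icc (0:ℝ) 1, min (g y) u := by
  set A : Set ℝ := {y ∈ Icc (0:ℝ) 1 | g y ≤ u} with hAdef
  have hA : MeasurableSet A := measurableSet_Icc.inter (measurableSet_le hg measurable_const)
  have hA1 : A ⊆ Icc 0 1 := fun x hx => hx.1
  have htop : volume (Icc (0:ℝ) 1 \ A) ≠ ⊤ := ((measure_mono diff_subset).trans_lt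
          (measure_Icc_lt_top (a := (0:ℝ)) (b := 1))).ne
  set m := (volume (Icc (0:ℝ) 1 \ A)).toReal with hm
  have hAm : volume (Icc (0:ℝ) 1 \ A) = ENNReal.ofReal m := (ENNReal.ofReal_toReal htop).symm
  have hm0 : 0 ≤ m := ENNReal.toReal_nonneg
  have hm1 : m ≤ 1 := by
    refine ENNReal.toReal_le_of_le_ofReal zero_le_one ((measure_mono diff_subset).trans ?_)
    simp
  calc _ = (∫⁻ t in Ioc (0:ℝ) m, min (G t) u) + ∫⁻ t in Ioc m 1, min (G t) u := by
        rw [← Ioc_union_Ioc_eq_Ioc hm0 hm1, lintegral_union measurableSet_Ioc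
          (Ioc_disjoint_Ioc_of_le le_rfl)]
    _ ≤ (∫⁻ t in Ioc (0:ℝ) m, u) + ∫⁻ t in Ioc m 1, G t := by
        gcongr
        · exact min_le_right _ _
        · exact min_le_left _ _
    _ ≤ (∫⁻ t in Icc (0:ℝ) 1 \ A, u) + ∫⁻ y in A, g y := by
        gcongr ?_ + ?_
        · simp [hAm]
        · exact H A m hA hA1 hm0 hAm
    _ = (∫⁻ y in Icc (0:ℝ) 1 \ A, min (g y) u) + ∫⁻ y in A, min (g y) u := by
        congr 1
        · refine setLIntegral_congr_fun (measurableSet_Icc.diff hA) fun y hy => ?_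
          have : u < g y := by
            by_contra hc
            exact hy.2 ⟨hy.1, not_lt.1 hc⟩
          exact (min_eq_right this.le).symm
        · exact setLIntegral_congr_fun hA fun y hy => (min_eq_left hy.2).symm
    _ = _ := by
        rw [← lintegral_union hA disjoint_sdiff_left, diff_union_of_subset hA1]

lemma rep_fin (r : ℝ) (h0 : 0 < r) (h1 : r < 1) (s : ℝ) (hs : 0 < s) :
    ∫⁻ u in Ioi (0:ℝ), min (ENNReal.ofReal s) (ENNReal.ofReal u) * ENNReal.ofReal (u ^ (r - 2)) =
      ENNReal.ofReal (1 / r + 1 / (1 - r)) * ENNReal.ofReal s ^ r := by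
  have e1 : ∫⁻ u in Ioc 0 s, min (ENNReal.ofReal s) (ENNReal.ofReal u) * ENNReal.ofReal (u ^ (r - 2))
      = ENNReal.ofReal (s ^ r / r) := by
    have : ∫ u in Ioc 0 s, u ^ (r - 1) = s ^ r / r := by
      rw [← intervalIntegral.integral_of_le hs.le, integral_rpow (Or.inl (by linarith))]
      simp [Real.zero_rpow h0.ne']
    rw [← this, ofReal_integral_eq_lintegral_ofReal]
    · refine setLIntegral_congr_fun measurableSet_Ioc fun u hu => ?_
      rw [min_eq_right (ENNReal.ofReal_le_ofReal hu.2), ← ENNReal.ofReal_mul hu.1.le]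
      congr 1
      rw [show r - 1 = 1 + (r - 2) by ring, Real.rpow_add hu.1, Real.rpow_one]
    · exact (intervalIntegrable_iff_integrableOn_Ioc_of_le hs.le).1
        (intervalIntegral.intervalIntegrable_rpow' (by linarith))
    · exact (ae_restrict_iff' measurableSet_Ioc).2 (Filter.Eventually.of_forall fun u hu =>
        Real.rpow_nonneg hu.1.le _)
  have e2 : ∫⁻ u in Ioi s, min (ENNReal.ofReal s) (ENNReal.ofReal u) * ENNReal.ofReal (u ^ (r - 2))
      = ENNReal.ofReal (s ^ r / (1 - r)) := by
    have : ∫ u in Ioi s, s * u ^ (r - 2) = s ^ r / (1 - r) := by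
      rw [integral_const_mul, integral_Ioi_rpow_of_lt (by linarith) hs,
        show r - 2 + 1 = r - 1 by ring, Real.rpow_sub_one hs.ne']
      have : r - 1 ≠ 0 := by linarith
      have : 1 - r ≠ 0 := by linarith
      grind
    rw [← this, ofReal_integral_eq_lintegral_ofReal]
    · refine setLIntegral_congr_fun measurableSet_Ioi fun u hu => ?_
      rw [min_eq_left (ENNReal.ofReal_le_ofReal (le_of_lt hu)), ← ENNReal.ofReal_mul hs.le]
    · exact (integrableOn_Ioi_rpow_of_lt (by linarith) hs).const_mul s
    · exact (ae_restrict_iff' measurableSet_Ioi).2 (Filter.Eventually.of_forall fun u hu =>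
        mul_nonneg hs.le (Real.rpow_nonneg (hs.trans hu).le _))
  rw [← Ioc_union_Ioi_eq_Ioi hs.le, lintegral_union measurableSet_Ioi
    (Ioc_disjoint_Ioi le_rfl), e1, e2]
  have : 0 < 1 - r := by linarith
  have : 0 < s ^ r := Real.rpow_pos_of_pos hs r
  rw [ENNReal.ofReal_rpow_of_pos hs, ← ENNReal.ofReal_mul (by positivity),
    ← ENNReal.ofReal_add (by positivity) (by positivity)]
  congr 1
  ring

lemma rep (r : ℝ) (h0 : 0 < r) (h1 : r < 1) (s : ENNReal) :
    ∫⁻ u in Ioi (0:ℝ), min s (ENNReal.ofReal u) * ENNReal.ofReal (u ^ (r - 2)) =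
      ENNReal.ofReal (1 / r + 1 / (1 - r)) * s ^ r := by
  have hpos : 0 < 1 / r + 1 / (1 - r) := by
    have : 0 < 1 - r := by linarith
    positivity
  rcases eq_or_ne s ⊤ with rfl | hs
  · rw [ENNReal.top_rpow_of_pos h0, ENNReal.mul_top (ENNReal.ofReal_pos.2 hpos).ne', eq_top_iff]
    refine ENNReal.le_of_forall_nnreal_lt fun x _ => ?_
    -- choose a finite level `s` whose value exceeds `x`
    have hx := rep_fin r h0 h1 (((x:ℝ) / (1 / r + 1 / (1 - r)) + 1) ^ (1/r)) (by positivity)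
    have : (x : ENNReal) ≤ ENNReal.ofReal (1 / r + 1 / (1 - r)) *
        ENNReal.ofReal (((x:ℝ) / (1 / r + 1 / (1 - r)) + 1) ^ (1/r)) ^ r := by
      rw [ENNReal.ofReal_rpow_of_nonneg (by positivity) h0.le, ← Real.rpow_mul (by positivity),
        one_div_mul_cancel h0.ne', Real.rpow_one, ← ENNReal.ofReal_mul hpos.le,
        ← ENNReal.ofReal_coe_nnreal]
      apply ENNReal.ofReal_le_ofReal
      rw [mul_add, mul_div_cancel₀ _ hpos.ne']
      linarith
    refine this.trans (hx ▸ ?_)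
    gcongr
    exact le_top
  rcases eq_or_ne s 0 with rfl | hs0
  · simp [ENNReal.zero_rpow_of_pos h0]
  · rw [← ENNReal.ofReal_toReal hs]
    exact rep_fin r h0 h1 _ (ENNReal.toReal_pos hs0 hs)

lemma key4 (r : ℝ) (h0 : 0 < r) (h1 : r < 1) (G g : ℝ → ENNReal) (hG : Measurable G)
    (hg : Measurable g)
    (H : ∀ u : ENNReal,
      ∫⁻ t in Ioc (0:ℝ) 1, min (G t) u ≤ ∫⁻ y in Icc (0:ℝ) 1, min (g y) u) :
    ∫⁻ t in Ioc (0:ℝ) 1, G t ^ r ≤ ∫⁻ y in Icc (0:ℝ) 1, g y ^ r := by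
  have hpos : 0 < 1 / r + 1 / (1 - r) := by
    have : 0 < 1 - r := by linarith
    positivity
  have aux : ∀ (k : ℝ → ENNReal) (S : Set ℝ), Measurable k →
      ENNReal.ofReal (1 / r + 1 / (1 - r)) * ∫⁻ t in S, k t ^ r =
      ∫⁻ u in Ioi (0:ℝ), (∫⁻ t in S, min (k t) (ENNReal.ofReal u)) * ENNReal.ofReal (u ^ (r - 2)) := by
    intro k S hk
    rw [← lintegral_const_mul _ (hk.pow_const r)]
    simp_rw [← rep r h0 h1]
    rw [lintegral_lintegral_swap]
    · refine lintegral_congr fun u => ?_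
      rw [lintegral_mul_const _ (by fun_prop)]
    · refine Measurable.aemeasurable ?_
      unfold Function.uncurry
      fun_prop
  rw [← ENNReal.mul_le_mul_iff_right (ENNReal.ofReal_pos.2 hpos).ne' ENNReal.ofReal_ne_top,
    aux G _ hG, aux g _ hg]
  exact lintegral_mono fun u => by
    gcongr ?_ * _
    exact H _

/-- Minkowski-type inequality (part a): for `0 < p ≤ q < ∞`,
`(∫₀¹(∫₀¹ |f(x₁,x₂)|^q dx₂)^{p/q} dx₁)^{1/p}
  ≥ (∫₀¹(∫₀¹ (f^{*₁}(t₁,x₂))^q dx₂)^{p/q} dt₁)^{1/p}`. -/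
theorem stmt_2 (p q : ℝ) (hp : 0 < p) (hpq : p ≤ q)
    (f : ℝ → ℝ → ℝ) (hf : Measurable (Function.uncurry f)) :
    (∫⁻ t₁ in Icc (0:ℝ) 1,
        (∫⁻ x₂ in Icc (0:ℝ) 1, ENNReal.ofReal (rearr1 f t₁ x₂) ^ q) ^ (p / q)) ^ (1 / p)
      ≤ (∫⁻ x₁ in Icc (0:ℝ) 1,
        (∫⁻ x₂ in Icc (0:ℝ) 1, ENNReal.ofReal |f x₁ x₂| ^ q) ^ (p / q)) ^ (1 / p) := by
  have hq : 0 < q := hp.trans_le hpq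
  refine ENNReal.rpow_le_rpow ?_ (by positivity)
  have hL : ∫⁻ t₁ in Icc (0:ℝ) 1,
        (∫⁻ x₂ in Icc (0:ℝ) 1, ENNReal.ofReal (rearr1 f t₁ x₂) ^ q) ^ (p / q) =
      ∫⁻ t₁ in Ioc (0:ℝ) 1,
        (∫⁻ x₂ in Icc (0:ℝ) 1, ENNReal.ofReal (RR f t₁ x₂) ^ q) ^ (p / q) := by
    rw [← setLIntegral_congr Ioc_ae_eq_Icc]
    refine setLIntegral_congr_fun measurableSet_Ioc fun t ht => ?_
    simp only [RR, ht.1, if_true]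
  rw [hL]
  have h1 : Measurable (Function.uncurry fun t x => ENNReal.ofReal (RR f t x) ^ q) :=
    (RR_meas f hf).ennreal_ofReal.pow_const q
  have h2 : Measurable (Function.uncurry fun t x => ENNReal.ofReal |f t x| ^ q) :=
    (hf.abs).ennreal_ofReal.pow_const q
  rcases eq_or_lt_of_le hpq with rfl | hlt
  · simp only [div_self hp.ne', ENNReal.rpow_one]
    exact key2 f hf p hp (Icc 0 1) measurableSet_Icc subset_rfl 0 le_rfl (by simp)
  · refine key4 (p / q) (by positivity) ((div_lt_one hq).2 hlt) _ _
      h1.lintegral_prod_right' h2.lintegral_prod_right' ?_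
    exact key3 _ _ h2.lintegral_prod_right' fun A m hA hA1 hm hAm =>
      key2 f hf q hq A hA hA1 m hm hAm
end

section
/- Let 0 < r < ∞, 0 < q < ∞ and β = max(1/q, 1/r). There exists a constant C > 0, depending only on q and r and not on α, such that for every α > 0 and every nonincreasing function f : (0,∞) → [0,∞) one has (∫₀^∞ (t^{-α} (∫₀ᵗ f(s)^r ds)^{1/r})^q dt/t)^{1/q} ≤ C α^{-β} (∫₀^∞ (t^{1/r - α} f(t))^q dt/t)^{1/q}. -/
open MeasureTheory Set

lemma aux_tail (δ s : ℝ) (hδ : 0 < δ) (hs : 0 < s) :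
    ∫⁻ t in Ici s, ENNReal.ofReal (t ^ (-δ - 1)) = ENNReal.ofReal (s ^ (-δ) / δ) := by
  rw [setLIntegral_congr (Ioi_ae_eq_Ici (a := s)).symm,
    ← ofReal_integral_eq_lintegral_ofReal
      (integrableOn_Ioi_rpow_of_lt (by linarith) hs)]
  · rw [integral_Ioi_rpow_of_lt (by linarith) hs]
    congr 1
    have : -δ - 1 + 1 = -δ := by ring
    rw [this, div_neg, neg_div, neg_neg]
  · filter_upwards [ae_restrict_mem measurableSet_Ioi] with x hx
    exact Real.rpow_nonneg (hs.trans hx).le _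

lemma aux_head (a t : ℝ) (ha : 0 < a) (ht : 0 < t) :
    ∫⁻ s in Ioc 0 t, ENNReal.ofReal (s ^ (a - 1)) = ENNReal.ofReal (t ^ a / a) := by
  have h1 : IntervalIntegrable (fun s : ℝ => s ^ (a - 1)) volume 0 t :=
    intervalIntegral.intervalIntegrable_rpow' (by linarith)
  rw [← ofReal_integral_eq_lintegral_ofReal
      ((intervalIntegrable_iff_integrableOn_Ioc_of_le ht.le).1 h1)]
  · rw [← intervalIntegral.integral_of_le ht.le, integral_rpow (Or.inl (by linarith))]
    congr 1
    have : a - 1 + 1 = a := by ring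
    rw [this, Real.zero_rpow ha.ne', sub_zero]
  · filter_upwards [ae_restrict_mem measurableSet_Ioc] with x hx
    exact Real.rpow_nonneg hx.1.le _

lemma aux_tonelli (δ : ℝ) (hδ : 0 < δ) (G : ℝ → ENNReal) (hG : Measurable G) :
    ∫⁻ t in Ioi (0:ℝ), ENNReal.ofReal (t ^ (-δ - 1)) * ∫⁻ s in Ioc 0 t, G s
      = ∫⁻ s in Ioi (0:ℝ), G s * ENNReal.ofReal (s ^ (-δ) / δ) := by
  have hT : Measurable (fun t : ℝ => ENNReal.ofReal (t ^ (-δ - 1))) := by fun_prop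
  set S : Set (ℝ × ℝ) := {z | z.2 ≤ z.1} with hS
  have hSm : MeasurableSet S := measurableSet_le measurable_snd measurable_fst
  set H : ℝ → ℝ → ENNReal := fun t s =>
    S.indicator (fun z => ENNReal.ofReal (z.1 ^ (-δ - 1)) * G z.2) (t, s) with hH
  have hHm : Measurable (Function.uncurry H) := by
    have : Measurable (S.indicator (fun z : ℝ × ℝ => ENNReal.ofReal (z.1 ^ (-δ - 1)) * G z.2)) :=
      ((hT.comp measurable_fst).mul (hG.comp measurable_snd)).indicator hSm
    exact this
  calc _ = ∫⁻ t in Ioi (0:ℝ), ∫⁻ s in Ioi (0:ℝ), H t s := by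
        refine setLIntegral_congr_fun measurableSet_Ioi (fun t ht => ?_)
        rw [← lintegral_const_mul _ hG]
        have : ∀ s, H t s = (Iic t).indicator (fun s => ENNReal.ofReal (t ^ (-δ - 1)) * G s) s := by
          intro s
          simp [hH, hS, indicator]
        simp_rw [this]
        rw [setLIntegral_indicator measurableSet_Iic, inter_comm, Ioi_inter_Iic]
    _ = ∫⁻ s in Ioi (0:ℝ), ∫⁻ t in Ioi (0:ℝ), H t s :=
        lintegral_lintegral_swap hHm.aemeasurable
    _ = _ := by
        refine setLIntegral_congr_fun measurableSet_Ioi (fun s hs => ?_)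
        have : ∀ t, H t s = (Ici s).indicator (fun t => G s * ENNReal.ofReal (t ^ (-δ - 1))) t := by
          intro t
          simp [hH, hS, indicator, mul_comm]
        simp_rw [this]
        have h2 : Ici s ∩ Ioi 0 = Ici s :=
          inter_eq_left.2 (fun x hx => mem_Ioi.2 (lt_of_lt_of_le (mem_Ioi.1 hs) (mem_Ici.1 hx)))
        rw [setLIntegral_indicator measurableSet_Ici, h2, lintegral_const_mul _ hT,
          aux_tail δ s hδ hs]

lemma aux_core (r q : ℝ) (hr : 0 < r) (hq : 0 < q) (α : ℝ) (K γ : ℝ) (hK : 0 ≤ K)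
    (hδ : 0 < α * q - γ) (f : ℝ → ℝ) (hf : Measurable f)
    (h : ∀ t : ℝ, 0 < t → (∫⁻ s in Ioc (0:ℝ) t, ENNReal.ofReal (f s) ^ r) ^ (q / r) ≤
      ENNReal.ofReal K * ENNReal.ofReal (t ^ γ) *
        ∫⁻ s in Ioc (0:ℝ) t, ENNReal.ofReal (f s) ^ q * ENNReal.ofReal (s ^ (q / r - 1 - γ))) :
    (∫⁻ t in Ioi (0:ℝ),
          (ENNReal.ofReal (t ^ (-α)) *
            (∫⁻ s in Ioc (0:ℝ) t, ENNReal.ofReal (f s) ^ r) ^ (1 / r)) ^ q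
          * ENNReal.ofReal t⁻¹) ≤ ENNReal.ofReal (K / (α * q - γ)) *
          (∫⁻ t in Ioi (0:ℝ),
            (ENNReal.ofReal (t ^ (1/r - α)) * ENNReal.ofReal (f t)) ^ q
            * ENNReal.ofReal t⁻¹) := by
  set G : ℝ → ENNReal := fun s => ENNReal.ofReal (f s) ^ q * ENNReal.ofReal (s ^ (q / r - 1 - γ))
    with hGdef
  have hG : Measurable G := by fun_prop
  set δ := α * q - γ with hδd
  calc _ ≤ ∫⁻ t in Ioi (0:ℝ), ENNReal.ofReal K *
        (ENNReal.ofReal (t ^ (-δ - 1)) * ∫⁻ s in Ioc 0 t, G s) := by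
        refine setLIntegral_mono' measurableSet_Ioi (fun t ht => ?_)
        have ht : 0 < t := ht
        rw [ENNReal.mul_rpow_of_nonneg _ _ hq.le, ← ENNReal.rpow_mul,
          ENNReal.ofReal_rpow_of_nonneg (Real.rpow_nonneg ht.le _) hq.le, ← Real.rpow_mul ht.le]
        have e1 : 1 / r * q = q / r := by ring
        rw [e1]
        have e2 : t ^ (-δ - 1) = t ^ (-α * q) * t ^ γ * t⁻¹ := by
          rw [← Real.rpow_neg_one t, ← Real.rpow_add ht, ← Real.rpow_add ht]
          congr 1; rw [hδd]; ring
        rw [e2, ENNReal.ofReal_mul (by positivity), ENNReal.ofReal_mul (by positivity)]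
        calc _ ≤ ENNReal.ofReal (t ^ (-α * q)) * (ENNReal.ofReal K * ENNReal.ofReal (t ^ γ) *
            ∫⁻ s in Ioc (0:ℝ) t, G s) * ENNReal.ofReal t⁻¹ := by
              gcongr; exact h t ht
          _ = _ := by ring
    _ = ENNReal.ofReal K * ∫⁻ s in Ioi (0:ℝ), G s * ENNReal.ofReal (s ^ (-δ) / δ) := by
        rw [lintegral_const_mul' _ _ ENNReal.ofReal_ne_top, aux_tonelli δ hδ G hG]
    _ = _ := by
        rw [← lintegral_const_mul' _ _ ENNReal.ofReal_ne_top,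
          ← lintegral_const_mul' _ _ ENNReal.ofReal_ne_top]
        refine setLIntegral_congr_fun measurableSet_Ioi (fun s hs => ?_)
        have hs : 0 < s := hs
        simp only [hGdef]
        rw [ENNReal.mul_rpow_of_nonneg _ _ hq.le,
          ENNReal.ofReal_rpow_of_nonneg (Real.rpow_nonneg hs.le _) hq.le, ← Real.rpow_mul hs.le]
        have e : K * (s ^ (q / r - 1 - γ) * (s ^ (-δ) / δ)) =
            K / δ * (s ^ ((1 / r - α) * q) * s⁻¹) := by
          have : s ^ (q / r - 1 - γ) * s ^ (-δ) = s ^ ((1 / r - α) * q) * s⁻¹ := by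
            rw [← Real.rpow_neg_one s, ← Real.rpow_add hs, ← Real.rpow_add hs]
            congr 1; rw [hδd]; ring
          rw [← this]; ring
        calc _ = ENNReal.ofReal (f s) ^ q *
            ENNReal.ofReal (K * (s ^ (q / r - 1 - γ) * (s ^ (-δ) / δ))) := by
              rw [ENNReal.ofReal_mul hK, ENNReal.ofReal_mul (by positivity)]; ring
          _ = _ := by
              rw [e, ENNReal.ofReal_mul (by positivity), ENNReal.ofReal_mul (by positivity)]; ring

lemma aux_small (p : ℝ) (hp : 0 < p) (hp1 : p ≤ 1) (F : ℝ → ENNReal)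
    (hF : AntitoneOn F (Ioi 0)) (t : ℝ) :
    (∫⁻ s in Ioc (0:ℝ) t, F s) ^ p ≤
      ∫⁻ s in Ioc (0:ℝ) t, F s ^ p * ENNReal.ofReal (s ^ (p - 1)) := by
  set J := ∫⁻ s in Ioc (0:ℝ) t, F s ^ p * ENNReal.ofReal (s ^ (p - 1)) with hJ
  by_cases hJt : J = ⊤
  · rw [hJt]; exact le_top
  have key : ∀ s ∈ Ioc (0:ℝ) t, F s ^ p * ENNReal.ofReal (s ^ p) ≤ J := by
    intro s hs
    calc F s ^ p * ENNReal.ofReal (s ^ p)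
        = ∫⁻ u in Ioc (0:ℝ) s, F s ^ p * ENNReal.ofReal (s ^ (p - 1)) := by
          rw [setLIntegral_const, Real.volume_Ioc, mul_assoc, sub_zero,
            ← ENNReal.ofReal_mul (Real.rpow_nonneg hs.1.le _)]
          congr 2
          rw [← Real.rpow_add_one hs.1.ne']; congr 1; ring
      _ ≤ ∫⁻ u in Ioc (0:ℝ) s, F u ^ p * ENNReal.ofReal (u ^ (p - 1)) := by
          refine setLIntegral_mono' measurableSet_Ioc (fun u hu => ?_)
          exact mul_le_mul' (ENNReal.rpow_le_rpow (hF hu.1 hs.1 hu.2) hp.le)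
            (ENNReal.ofReal_le_ofReal
              (Real.rpow_le_rpow_of_nonpos hu.1 hu.2 (by linarith)))
      _ ≤ J := lintegral_mono_set (Ioc_subset_Ioc_right hs.2)
  have hI : ∫⁻ s in Ioc (0:ℝ) t, F s ≤ J ^ (1 / p) := by
    calc ∫⁻ s in Ioc (0:ℝ) t, F s
        ≤ ∫⁻ s in Ioc (0:ℝ) t, J ^ ((1 - p) / p) * (F s ^ p * ENNReal.ofReal (s ^ (p - 1))) := by
          refine setLIntegral_mono' measurableSet_Ioc (fun s hs => ?_)
          have h1 := ENNReal.rpow_le_rpow (key s hs) (z := (1 - p) / p)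
            (div_nonneg (by linarith) hp.le)
          rw [ENNReal.mul_rpow_of_nonneg _ _ (div_nonneg (by linarith) hp.le),
            ← ENNReal.rpow_mul, ENNReal.ofReal_rpow_of_pos (Real.rpow_pos_of_pos hs.1 _),
            ← Real.rpow_mul hs.1.le, mul_div_cancel₀ _ hp.ne'] at h1
          calc F s = F s ^ (1 - p) * F s ^ p * ENNReal.ofReal (s ^ (1 - p) * s ^ (p - 1)) := by
                rw [← ENNReal.rpow_add_of_nonneg _ _ (by linarith) hp.le, ← Real.rpow_add hs.1]
                simp
            _ = F s ^ (1 - p) * ENNReal.ofReal (s ^ (1 - p)) *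
                (F s ^ p * ENNReal.ofReal (s ^ (p - 1))) := by
                rw [ENNReal.ofReal_mul (Real.rpow_nonneg hs.1.le _)]; ring
            _ ≤ _ := by gcongr
      _ = J ^ ((1 - p) / p) * J := by
          rw [lintegral_const_mul' _ _
            (ENNReal.rpow_ne_top_of_nonneg (div_nonneg (by linarith) hp.le) hJt)]
      _ = J ^ (1 / p) := by
          nth_rewrite 2 [← ENNReal.rpow_one J]
          rw [← ENNReal.rpow_add_of_nonneg _ _ (div_nonneg (by linarith) hp.le) zero_le_one]
          congr 1; field_simp; ring
  calc _ ≤ (J ^ (1 / p)) ^ p := ENNReal.rpow_le_rpow hI hp.le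
    _ = J := by rw [← ENNReal.rpow_mul, one_div_mul_cancel hp.ne', ENNReal.rpow_one]

lemma aux_large (p : ℝ) (hp : 1 < p) (a : ℝ) (ha : 0 < a) (F : ℝ → ENNReal)
    (hF : Measurable F) (t : ℝ) (ht : 0 < t) :
    (∫⁻ s in Ioc (0:ℝ) t, F s) ^ p ≤ ENNReal.ofReal (a ^ (1 - p)) *
      ENNReal.ofReal (t ^ (a * (p - 1))) *
      ∫⁻ s in Ioc (0:ℝ) t, F s ^ p * ENNReal.ofReal (s ^ (p - 1 - a * (p - 1))) := by
  have hp0 : 0 < p := by linarith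
  have hp1 : 0 < p - 1 := by linarith
  set c := (1 - a) * (p - 1) / p with hc
  have hpq : p.HolderConjugate (p / (p - 1)) := Real.HolderConjugate.conjExponent hp
  have hH := ENNReal.lintegral_mul_le_Lp_mul_Lq (volume.restrict (Ioc (0:ℝ) t)) hpq
    (f := fun s => F s * ENNReal.ofReal (s ^ c)) (g := fun s => ENNReal.ofReal (s ^ (-c)))
    (by fun_prop) (by fun_prop)
  have e0 : ∫⁻ s in Ioc (0:ℝ) t, F s = ∫⁻ s in Ioc (0:ℝ) t,
      ((fun s => F s * ENNReal.ofReal (s ^ c)) * (fun s => ENNReal.ofReal (s ^ (-c)))) s := by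
    refine setLIntegral_congr_fun measurableSet_Ioc (fun s hs => ?_)
    simp only [Pi.mul_apply]
    rw [mul_assoc, ← ENNReal.ofReal_mul (Real.rpow_nonneg hs.1.le _), ← Real.rpow_add hs.1]
    simp
  have e1 : ∫⁻ s in Ioc (0:ℝ) t, (F s * ENNReal.ofReal (s ^ c)) ^ p =
      ∫⁻ s in Ioc (0:ℝ) t, F s ^ p * ENNReal.ofReal (s ^ (p - 1 - a * (p - 1))) := by
    refine setLIntegral_congr_fun measurableSet_Ioc (fun s hs => ?_)
    rw [ENNReal.mul_rpow_of_nonneg _ _ hp0.le,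
      ENNReal.ofReal_rpow_of_pos (Real.rpow_pos_of_pos hs.1 _), ← Real.rpow_mul hs.1.le]
    congr 3
    rw [hc]; field_simp
  have e2 : ∫⁻ s in Ioc (0:ℝ) t, (ENNReal.ofReal (s ^ (-c))) ^ (p / (p - 1)) =
      ENNReal.ofReal (t ^ a / a) := by
    rw [← aux_head a t ha ht]
    refine setLIntegral_congr_fun measurableSet_Ioc (fun s hs => ?_)
    rw [ENNReal.ofReal_rpow_of_pos (Real.rpow_pos_of_pos hs.1 _), ← Real.rpow_mul hs.1.le]
    congr 2
    rw [hc]; field_simp; ring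
  rw [← e0, e1, e2] at hH
  have h2 := ENNReal.rpow_le_rpow hH hp0.le
  rw [ENNReal.mul_rpow_of_nonneg _ _ hp0.le, ← ENNReal.rpow_mul, ← ENNReal.rpow_mul,
    one_div_mul_cancel hp0.ne', ENNReal.rpow_one] at h2
  refine h2.trans (le_of_eq ?_)
  rw [mul_comm, ENNReal.ofReal_rpow_of_pos (by positivity), ← ENNReal.ofReal_mul (by positivity)]
  congr 2
  have e3 : 1 / (p / (p - 1)) * p = p - 1 := by field_simp
  rw [e3, Real.div_rpow (by positivity) ha.le, ← Real.rpow_mul ht.le, div_eq_mul_inv,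
    ← Real.rpow_neg ha.le, mul_comm]
  congr 2; ring

/-- Hardy's inequality (first form), with constant `C` depending only on `q, r`
(not on `α`): for every `α > 0` and nonincreasing `f : (0,∞) → [0,∞)`,
`(∫₀^∞ (t^{-α} (∫₀ᵗ f(s)^r ds)^{1/r})^q dt/t)^{1/q}
  ≤ C α^{-β} (∫₀^∞ (t^{1/r-α} f(t))^q dt/t)^{1/q}`, `β = max(1/q, 1/r)`. -/
theorem stmt_4 (r q : ℝ) (hr : 0 < r) (hq : 0 < q) :
    ∃ C : ℝ, 0 < C ∧ ∀ α : ℝ, 0 < α → ∀ f : ℝ → ℝ, Measurable f →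
      (∀ x ∈ Ioi (0:ℝ), 0 ≤ f x) → AntitoneOn f (Ioi 0) →
      (∫⁻ t in Ioi (0:ℝ),
          (ENNReal.ofReal (t ^ (-α)) *
            (∫⁻ s in Ioc (0:ℝ) t, ENNReal.ofReal (f s) ^ r) ^ (1 / r)) ^ q
          * ENNReal.ofReal t⁻¹) ^ (1 / q)
        ≤ ENNReal.ofReal C * ENNReal.ofReal (α ^ (-(max (1/q) (1/r)))) *
          (∫⁻ t in Ioi (0:ℝ),
            (ENNReal.ofReal (t ^ (1/r - α)) * ENNReal.ofReal (f t)) ^ q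
            * ENNReal.ofReal t⁻¹) ^ (1 / q) := by
  have hFq : ∀ x : ENNReal, (x ^ r) ^ (q / r) = x ^ q := fun x => by
    rw [← ENNReal.rpow_mul, mul_div_cancel₀ _ hr.ne']
  rcases le_or_gt q r with hqr | hqr
  · refine ⟨q ^ (-(1 / q)), by positivity, fun α hα f hf _ hanti => ?_⟩
    have hcore := aux_core r q hr hq α 1 0 zero_le_one (by simp; positivity) f hf (by
      intro t ht
      have := aux_small (q / r) (by positivity) ((div_le_one hr).2 hqr)
        (fun s => ENNReal.ofReal (f s) ^ r)
        (fun x hx y hy hxy => ENNReal.rpow_le_rpow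
          (ENNReal.ofReal_le_ofReal (hanti hx hy hxy)) hr.le) t
      simpa [hFq] using this)
    have h2 := ENNReal.rpow_le_rpow hcore (z := 1 / q) (by positivity)
    refine h2.trans (le_of_eq ?_)
    rw [ENNReal.mul_rpow_of_nonneg _ _ (by positivity), sub_zero,
      ENNReal.ofReal_rpow_of_pos (by positivity), ← ENNReal.ofReal_mul (by positivity),
      max_eq_left (one_div_le_one_div_of_le hq hqr), ← Real.mul_rpow hq.le hα.le,
      Real.rpow_neg (by positivity), one_div (α * q), Real.inv_rpow (by positivity), mul_comm α q]
  · refine ⟨r ^ (-(1 / r)), by positivity, fun α hα f hf _ hanti => ?_⟩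
    have hp : 1 < q / r := (one_lt_div hr).2 hqr
    have hd : α * q - α * r * (q / r - 1) = α * r := by field_simp; ring
    have hcore := aux_core r q hr hq α ((α * r) ^ (1 - q / r)) (α * r * (q / r - 1))
      (by positivity) (by rw [hd]; positivity) f hf (by
      intro t ht
      have := aux_large (q / r) hp (α * r) (by positivity)
        (fun s => ENNReal.ofReal (f s) ^ r) (by fun_prop) t ht
      simpa only [hFq] using this)
    have h2 := ENNReal.rpow_le_rpow hcore (z := 1 / q) (by positivity)
    refine h2.trans (le_of_eq ?_)
    rw [hd, ENNReal.mul_rpow_of_nonneg _ _ (by positivity),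
      ENNReal.ofReal_rpow_of_pos (by positivity), ← ENNReal.ofReal_mul (by positivity),
      max_eq_right (one_div_le_one_div_of_le hr hqr.le), ← Real.mul_rpow hr.le hα.le,
      ← Real.rpow_sub_one (by positivity), ← Real.rpow_mul (by positivity), mul_comm α r]
    congr 3
    field_simp; ring
end

section
/- Let f ∈ L¹([0,1]²) with ‖f‖_{L_{(2,1)}} < ∞. Then for every N₂ ∈ ℕ, every finite set e ⊂ ℕ, and every family assigning to each m₁ ∈ e a finite set ω(m₁) ⊂ ℕ with card ω(m₁) = N₂, one has (Σ_{m₁∈e} Σ_{m₂∈ω(m₁)} |a_{m₁m₂}|²)^{1/2} ≤ M₂ N₂^{1/2} ‖f‖_{L_{(2,1)}}. -/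
open MeasureTheory Set ENNReal

/-- The mixed-norm Lebesgue (quasi-)norm on `[0,1]²`:
`‖f‖_{L_{(p₁,p₂)}} = (∫₀¹(∫₀¹|f(x₁,x₂)|^{p₁} dx₁)^{p₂/p₁} dx₂)^{1/p₂}`. -/
noncomputable def mixedNorm (p₁ p₂ : ℝ) (f : ℝ → ℝ → ℂ) : ℝ≥0∞ :=
  (∫⁻ x₂ in Icc (0:ℝ) 1,
      (∫⁻ x₁ in Icc (0:ℝ) 1, (‖f x₁ x₂‖₊ : ℝ≥0∞) ^ p₁) ^ (p₂ / p₁)) ^ (1 / p₂)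

/-- `φ` is an orthonormal system in `L²[0,1]`. -/
def OrthonormalOn01 (φ : ℕ → ℝ → ℂ) : Prop :=
  ∀ m n : ℕ,
    ∫ x in Icc (0:ℝ) 1, φ m x * (starRingEnd ℂ) (φ n x) = if m = n then 1 else 0

/-- The Fourier coefficients of `f` with respect to the product system
`φ_{k₁}(x₁) ψ_{k₂}(x₂)`. -/
noncomputable def coeff (φ ψ : ℕ → ℝ → ℂ) (f : ℝ → ℝ → ℂ) (k₁ k₂ : ℕ) : ℂ :=
  ∫ x₂ in Icc (0:ℝ) 1, ∫ x₁ in Icc (0:ℝ) 1,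
    f x₁ x₂ * (starRingEnd ℂ) (φ k₁ x₁) * (starRingEnd ℂ) (ψ k₂ x₂)

lemma bessel_aux (μ : Measure ℝ) (φ : ℕ → ℝ → ℂ) (hφ : ∀ m, MemLp (φ m) 2 μ)
    (horth : ∀ m n : ℕ, ∫ x, φ m x * (starRingEnd ℂ) (φ n x) ∂μ = if m = n then 1 else 0)
    (g : ℝ → ℂ) (hg : AEStronglyMeasurable g μ) (e : Finset ℕ) :
    (∑ m ∈ e, ‖∫ x, g x * (starRingEnd ℂ) (φ m x) ∂μ‖ₑ ^ (2:ℝ)) ^ ((1:ℝ)/2)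
      ≤ (∫⁻ x, ‖g x‖ₑ ^ (2:ℝ) ∂μ) ^ ((1:ℝ)/2) := by
  have hE : eLpNorm g 2 μ = (∫⁻ x, ‖g x‖ₑ ^ (2:ℝ) ∂μ) ^ ((1:ℝ)/2) := by
    rw [eLpNorm_eq_lintegral_rpow_enorm_toReal (by simp) (by simp)]
    simp
  rw [← hE]
  by_cases htop : eLpNorm g 2 μ = ⊤
  · rw [htop]; exact le_top
  have hgL : MemLp g 2 μ := ⟨hg, lt_top_iff_ne_top.2 htop⟩
  have hin : ∀ (h k : ℝ → ℂ) (hh : MemLp h 2 μ) (hk : MemLp k 2 μ),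
      inner ℂ (hh.toLp h) (hk.toLp k) = ∫ x, k x * (starRingEnd ℂ) (h x) ∂μ := by
    intro h k hh hk
    rw [L2.inner_def]
    apply integral_congr_ae
    filter_upwards [hh.coeFn_toLp, hk.coeFn_toLp] with x h1 h2
    rw [h1, h2]; rfl
  have hO : Orthonormal ℂ (fun m => (hφ m).toLp (φ m)) := by
    rw [orthonormal_iff_ite]
    intro i j
    rw [hin, horth]
    simp [eq_comm]
  have hB := hO.sum_inner_products_le (x := hgL.toLp g) (s := e)
  simp only [hin] at hB
  have hn : ‖hgL.toLp g‖ₑ = eLpNorm g 2 μ := Lp.enorm_toLp ..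
  rw [← hn]
  have h2 : (∑ m ∈ e, ‖∫ x, g x * (starRingEnd ℂ) (φ m x) ∂μ‖ₑ ^ (2:ℝ))
      ≤ ‖hgL.toLp g‖ₑ ^ (2:ℝ) := by
    have := ENNReal.ofReal_le_ofReal hB
    rw [ENNReal.ofReal_sum_of_nonneg (fun _ _ => by positivity)] at this
    simpa only [ENNReal.rpow_two, ENNReal.ofReal_pow (norm_nonneg _), ofReal_norm] using this
  calc _ ≤ (‖hgL.toLp g‖ₑ ^ (2:ℝ)) ^ ((1:ℝ)/2) := ENNReal.rpow_le_rpow h2 (by norm_num)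
    _ = _ := by rw [← ENNReal.rpow_mul]; norm_num

lemma minkowski_aux (μ : Measure ℝ) (c : ℕ → ℝ → ℂ) (hc : ∀ m, Integrable (c m) μ)
    (e : Finset ℕ) :
    (∑ m ∈ e, (∫⁻ x, ‖c m x‖ₑ ∂μ) ^ (2:ℝ)) ^ ((1:ℝ)/2)
      ≤ ∫⁻ x, (∑ m ∈ e, ‖c m x‖ₑ ^ (2:ℝ)) ^ ((1:ℝ)/2) ∂μ := by
  have hnorm : ∀ w : EuclideanSpace ℝ e, ‖w‖ₑ = (∑ m : e, ‖w m‖ₑ ^ (2:ℝ)) ^ ((1:ℝ)/2) := by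
    intro w
    rw [← ofReal_norm, EuclideanSpace.norm_eq, Real.sqrt_eq_rpow,
      ← ENNReal.ofReal_rpow_of_nonneg (Finset.sum_nonneg fun _ _ => by positivity) (by norm_num),
      ENNReal.ofReal_sum_of_nonneg (fun _ _ => by positivity)]
    simp only [ENNReal.rpow_two, ENNReal.ofReal_pow (norm_nonneg _), ofReal_norm]
  let v : ℝ → EuclideanSpace ℝ e := fun x => WithLp.toLp 2 (fun m : e => ‖c m x‖)
  have hcoord : ∀ m : e, (∫ x, v x ∂μ) m = ∫ x, ‖c m x‖ ∂μ := by
    intro m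
    have hv : Integrable v μ := by
      rw [integrable_piLp_iff]
      exact fun i => (hc i).norm
    exact ((EuclideanSpace.proj (𝕜 := ℝ) m).integral_comp_comm hv).symm
  have h := enorm_integral_le_lintegral_enorm (μ := μ) v
  rw [hnorm] at h
  simp only [hnorm, hcoord] at h
  have h3 : ∀ m, ‖∫ x, ‖c m x‖ ∂μ‖ₑ = ∫⁻ x, ‖c m x‖ₑ ∂μ := by
    intro m
    rw [← ofReal_integral_norm_eq_lintegral_enorm (hc m), Real.enorm_eq_ofReal]
    positivity
  simp only [h3, v, enorm_norm] at h
  rw [Finset.sum_coe_sort e (fun m => (∫⁻ x, ‖c m x‖ₑ ∂μ) ^ (2:ℝ))] at h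
  refine h.trans (le_of_eq ?_)
  congr 1; ext x
  rw [Finset.sum_coe_sort e (fun m => ‖c m x‖ₑ ^ (2:ℝ))]

/-- First inequality of Lemma 5.1:
`(Σ_{m₁∈e} Σ_{m₂∈ω(m₁)} |a_{m₁m₂}|²)^{1/2} ≤ M₂ N₂^{1/2} ‖f‖_{L_{(2,1)}}`
whenever each `ω(m₁)` has cardinality `N₂`. -/
theorem stmt_6 (φ ψ : ℕ → ℝ → ℂ) (M₁ M₂ : ℝ)
    (hφm : ∀ m, Measurable (φ m)) (hψm : ∀ m, Measurable (ψ m))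
    (hφ : OrthonormalOn01 φ) (hψ : OrthonormalOn01 ψ)
    (hφbd : ∀ m, ∀ x ∈ Icc (0:ℝ) 1, ‖φ m x‖ ≤ M₁)
    (hψbd : ∀ m, ∀ x ∈ Icc (0:ℝ) 1, ‖ψ m x‖ ≤ M₂)
    (f : ℝ → ℝ → ℂ)
    (hfint : IntegrableOn (Function.uncurry f) (Icc (0:ℝ) 1 ×ˢ Icc (0:ℝ) 1))
    (hffin : mixedNorm 2 1 f ≠ ⊤)
    (N₂ : ℕ) (e : Finset ℕ) (ω : ℕ → Finset ℕ)
    (hω : ∀ m₁ ∈ e, (ω m₁).card = N₂) :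
    (∑ m₁ ∈ e, ∑ m₂ ∈ ω m₁, (‖coeff φ ψ f m₁ m₂‖₊ : ℝ≥0∞) ^ (2:ℝ)) ^ ((1:ℝ)/2)
      ≤ ENNReal.ofReal M₂ * (N₂ : ℝ≥0∞) ^ ((1:ℝ)/2) * mixedNorm 2 1 f := by
  set μ : Measure ℝ := volume.restrict (Icc (0:ℝ) 1) with hμ
  have : IsFiniteMeasure μ := by rw [hμ]; infer_instance
  have hmem : ∀ᵐ x ∂μ, x ∈ Icc (0:ℝ) 1 := ae_restrict_mem measurableSet_Icc
  have hf : Integrable (Function.uncurry f) (μ.prod μ) := by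
    rw [hμ, Measure.prod_restrict, ← Measure.volume_eq_prod]; exact hfint
  have hφL : ∀ m, MemLp (φ m) 2 μ := fun m =>
    MemLp.of_bound (hφm m).aestronglyMeasurable M₁ (hmem.mono fun x hx => hφbd m x hx)
  let c : ℕ → ℝ → ℂ := fun m y => ∫ x, f x y * (starRingEnd ℂ) (φ m x) ∂μ
  have hc : ∀ m, Integrable (c m) μ := by
    intro m
    have h1 : Integrable (fun z : ℝ × ℝ => Function.uncurry f z * (starRingEnd ℂ) (φ m z.1))
        (μ.prod μ) := by
      refine hf.mul_bdd (c := M₁) ?_ ?_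
      · exact (Complex.continuous_conj.measurable.comp
          ((hφm m).comp measurable_fst)).aestronglyMeasurable
      · filter_upwards [Measure.quasiMeasurePreserving_fst.ae hmem] with z hz
        simpa using hφbd m z.1 hz
    exact h1.integral_prod_right
  have hcoef : ∀ m k, ‖coeff φ ψ f m k‖ₑ ≤ ENNReal.ofReal M₂ * ∫⁻ y, ‖c m y‖ₑ ∂μ := by
    intro m k
    have : coeff φ ψ f m k = ∫ y, c m y * (starRingEnd ℂ) (ψ k y) ∂μ := by
      unfold coeff
      simp only [integral_mul_const, c, hμ]
    rw [this, ← lintegral_const_mul' _ _ ENNReal.ofReal_ne_top]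
    refine (enorm_integral_le_lintegral_enorm _).trans (lintegral_mono_ae ?_)
    filter_upwards [hmem] with y hy
    rw [enorm_mul, mul_comm]
    gcongr
    rw [← ofReal_norm]
    apply ENNReal.ofReal_le_ofReal
    simpa using hψbd k y hy
  have hmix : mixedNorm 2 1 f = ∫⁻ y, (∫⁻ x, ‖f x y‖ₑ ^ (2:ℝ) ∂μ) ^ ((1:ℝ)/2) ∂μ := by
    simp [mixedNorm, hμ, enorm_eq_nnnorm]
  have hkey : (∑ m ∈ e, (∫⁻ x, ‖c m x‖ₑ ∂μ) ^ (2:ℝ)) ^ ((1:ℝ)/2) ≤ mixedNorm 2 1 f := by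
    refine (minkowski_aux μ c hc e).trans ?_
    rw [hmix]
    apply lintegral_mono_ae
    filter_upwards [hf.swap.aestronglyMeasurable.prodMk_left] with y hy
    exact bessel_aux μ φ hφL hφ (fun x => f x y) hy e
  calc _ ≤ (∑ m ∈ e, (N₂ : ℝ≥0∞) * (ENNReal.ofReal M₂ ^ (2:ℝ)
        * (∫⁻ x, ‖c m x‖ₑ ∂μ) ^ (2:ℝ))) ^ ((1:ℝ)/2) := by
        refine ENNReal.rpow_le_rpow (Finset.sum_le_sum fun m hm => ?_) (by norm_num)
        rw [← hω m hm, ← nsmul_eq_mul]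
        refine Finset.sum_le_card_nsmul _ _ _ fun k _ => ?_
        rw [← ENNReal.mul_rpow_of_nonneg _ _ (by norm_num)]
        exact ENNReal.rpow_le_rpow (hcoef m k) (by norm_num)
    _ = ENNReal.ofReal M₂ * (N₂ : ℝ≥0∞) ^ ((1:ℝ)/2)
        * (∑ m ∈ e, (∫⁻ x, ‖c m x‖ₑ ∂μ) ^ (2:ℝ)) ^ ((1:ℝ)/2) := by
        rw [← Finset.mul_sum, ← Finset.mul_sum, ENNReal.mul_rpow_of_nonneg _ _ (by norm_num),
          ENNReal.mul_rpow_of_nonneg _ _ (by norm_num), ← ENNReal.rpow_mul]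
        norm_num
        ring
    _ ≤ _ := by gcongr
end

section
/- Let f ∈ L¹([0,1]²). Then for all N₁, N₂ ∈ ℕ one has S(N₁,N₂) ≤ 2 max(1,M₁) max(1,M₂) · inf{ (N₁N₂)^{1/2} ‖f₀₀‖_{L_{(1,1)}} + N₂^{1/2} ‖f₁₀‖_{L_{(2,1)}} + N₁^{1/2} ‖f₀₁‖_{L_{(1,2)}} + ‖f₁₁‖_{L_{(2,2)}} }, where the infimum is over all decompositions f = f₀₀ + f₁₀ + f₀₁ + f₁₁ into measurable functions with finite respective mixed norms. -/
open MeasureTheory Set ENNReal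

/-- `S(N₁,N₂)`: the supremum of `(Σ_{m₁∈e} Σ_{m₂∈ω(m₁)} |a_{m₁m₂}|²)^{1/2}` over all
finite `e ⊂ ℕ` with `card e = N₁` and all families `ω` with `card ω(m₁) = N₂`. -/
noncomputable def Ssup (a : ℕ → ℕ → ℂ) (N₁ N₂ : ℕ) : ℝ≥0∞ :=
  ⨆ (e : Finset ℕ) (_ : e.card = N₁) (ω : ℕ → Finset ℕ)
    (_ : ∀ m₁ ∈ e, (ω m₁).card = N₂),
      (∑ m₁ ∈ e, ∑ m₂ ∈ ω m₁, (‖a m₁ m₂‖₊ : ℝ≥0∞) ^ (2:ℝ)) ^ ((1:ℝ)/2)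

/-- Lebesgue measure on `[0,1]`. -/
noncomputable abbrev mu01 : Measure ℝ := volume.restrict (Icc (0:ℝ) 1)

instance mu01_prob : IsProbabilityMeasure mu01 := ⟨by simp [mu01]⟩

lemma aux_cs (h : ℝ → ℝ≥0∞) (hh : AEMeasurable h mu01) :
    (∫⁻ x, h x ∂mu01) ≤ (∫⁻ x, h x ^ (2:ℝ) ∂mu01) ^ ((1:ℝ)/2) := by
  have := ENNReal.lintegral_mul_le_Lp_mul_Lq mu01 Real.HolderConjugate.two_two hh
    (aemeasurable_const (b := (1:ℝ≥0∞)))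
  simpa using this

lemma aux_bessel (φ : ℕ → ℝ → ℂ) (M : ℝ) (hm : ∀ m, Measurable (φ m))
    (hon : OrthonormalOn01 φ) (hbd : ∀ m, ∀ x ∈ Icc (0:ℝ) 1, ‖φ m x‖ ≤ M)
    (s : Finset ℕ) (h : ℝ → ℂ) (hh : AEStronglyMeasurable h mu01) :
    ∑ m ∈ s, ‖∫ x, h x * (starRingEnd ℂ) (φ m x) ∂mu01‖ₑ ^ (2:ℝ)
      ≤ ∫⁻ x, ‖h x‖ₑ ^ (2:ℝ) ∂mu01 := by
  by_cases htop : ∫⁻ x, ‖h x‖ₑ ^ (2:ℝ) ∂mu01 = ⊤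
  · rw [htop]; exact le_top
  have hL : MemLp h 2 mu01 := by
    refine ⟨hh, ?_⟩
    rw [eLpNorm_lt_top_iff_lintegral_rpow_enorm_lt_top (by simp) (by simp)]
    simpa using lt_top_iff_ne_top.2 htop
  have hφL : ∀ m, MemLp (φ m) 2 mu01 := fun m =>
    MemLp.of_bound (hm m).aestronglyMeasurable M
      ((ae_restrict_iff' measurableSet_Icc).2 (Filter.Eventually.of_forall (hbd m)))
  have key : ∀ (u : ℝ → ℂ) (hu : MemLp u 2 mu01) m,
      inner ℂ ((hφL m).toLp _) (hu.toLp _) = ∫ x, u x * (starRingEnd ℂ) (φ m x) ∂mu01 := by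
    intro u hu m
    rw [L2.inner_def]
    apply integral_congr_ae
    filter_upwards [hu.coeFn_toLp, (hφL m).coeFn_toLp] with x h1 h2
    rw [h1, h2]; simp [RCLike.inner_apply]
  have hO : Orthonormal ℂ (fun m => (hφL m).toLp (φ m)) := by
    rw [orthonormal_iff_ite]
    intro i j
    rw [key _ (hφL j) i]
    have := hon j i
    rw [this]; simp [eq_comm]
  have hb := hO.sum_inner_products_le (hL.toLp h) (s := s)
  have hn : ‖hL.toLp h‖ ^ 2 = (∫⁻ x, ‖h x‖ₑ ^ (2:ℝ) ∂mu01).toReal := by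
    rw [Lp.norm_toLp, eLpNorm_eq_lintegral_rpow_enorm_toReal (by simp) (by simp),
      ← ENNReal.toReal_pow, ← ENNReal.rpow_natCast, ← ENNReal.rpow_mul]
    simp
  rw [hn] at hb
  rw [← ENNReal.ofReal_toReal htop]
  refine le_trans (le_of_eq ?_) (ENNReal.ofReal_le_ofReal hb)
  rw [ENNReal.ofReal_sum_of_nonneg (fun _ _ => by positivity)]
  refine Finset.sum_congr rfl fun m _ => ?_
  rw [key h hL m, ENNReal.ofReal_pow (norm_nonneg _), ofReal_norm, ← ENNReal.rpow_natCast]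
  simp

lemma aux_mink (s : Finset ℕ) (u : ℕ → ℝ → ℝ≥0∞) (hu : ∀ m, Measurable (u m)) :
    (∑ m ∈ s, (∫⁻ x, u m x ∂mu01) ^ (2:ℝ)) ^ ((1:ℝ)/2)
      ≤ ∫⁻ x, (∑ m ∈ s, u m x ^ (2:ℝ)) ^ ((1:ℝ)/2) ∂mu01 := by
  set R := ∫⁻ x, (∑ m ∈ s, u m x ^ (2:ℝ)) ^ ((1:ℝ)/2) ∂mu01 with hR
  by_cases hRt : R = ⊤
  · rw [hRt]; exact le_top
  set A : ℕ → ℝ≥0∞ := fun m => ∫⁻ x, u m x ∂mu01 with hA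
  have hAR : ∀ m ∈ s, A m ≤ R := fun m hms => by
    refine lintegral_mono fun x => ?_
    have h1 : u m x ^ (2:ℝ) ≤ ∑ m ∈ s, u m x ^ (2:ℝ) :=
      Finset.single_le_sum (f := fun m => u m x ^ (2:ℝ)) (fun _ _ => zero_le) hms
    have h2 := ENNReal.rpow_le_rpow h1 (z := (1:ℝ)/2) (by norm_num)
    rwa [← ENNReal.rpow_mul, show (2:ℝ) * (1/2) = 1 by norm_num, ENNReal.rpow_one] at h2
  set Q := ∑ m ∈ s, A m ^ (2:ℝ) with hQ
  have hQt : Q ≠ ⊤ := by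
    rw [hQ]
    refine (ENNReal.sum_lt_top.2 fun m hms => ?_).ne
    exact ENNReal.rpow_lt_top_of_nonneg (by norm_num) (lt_of_le_of_lt (hAR m hms)
      (lt_top_iff_ne_top.2 hRt)).ne
  set T := Q ^ ((1:ℝ)/2) with hT
  have hTt : T ≠ ⊤ := ENNReal.rpow_ne_top_of_nonneg (by norm_num) hQt
  have hTT : T * T = Q := by
    rw [hT, ← ENNReal.rpow_add_of_nonneg _ _ (by norm_num) (by norm_num)]
    norm_num
  by_cases hT0 : T = 0
  · rw [hT0]; exact zero_le
  have main : T * T ≤ T * R := by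
    rw [hTT]
    calc Q = ∫⁻ x, ∑ m ∈ s, A m * u m x ∂mu01 := by
          rw [lintegral_finsetSum _ (fun m _ => (hu m).const_mul _)]
          refine Finset.sum_congr rfl fun m _ => ?_
          rw [lintegral_const_mul _ (hu m), ENNReal.rpow_two, sq]
      _ ≤ ∫⁻ x, T * (∑ m ∈ s, u m x ^ (2:ℝ)) ^ ((1:ℝ)/2) ∂mu01 :=
          lintegral_mono fun x =>
            ENNReal.inner_le_Lp_mul_Lq s A (fun m => u m x) Real.HolderConjugate.two_two
      _ = T * R := lintegral_const_mul' _ _ hTt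
  exact (ENNReal.mul_le_mul_iff_right hT0 hTt).1 main

/-- The weighted sum over the index family. -/
noncomputable def TT (e : Finset ℕ) (ω : ℕ → Finset ℕ) (a : ℕ → ℕ → ℂ) : ℝ≥0∞ :=
  (∑ m₁ ∈ e, ∑ m₂ ∈ ω m₁, ‖a m₁ m₂‖ₑ ^ (2:ℝ)) ^ ((1:ℝ)/2)

lemma TT_add (e : Finset ℕ) (ω : ℕ → Finset ℕ) (a b : ℕ → ℕ → ℂ) :
    TT e ω (fun i j => a i j + b i j) ≤ TT e ω a + TT e ω b := by
  unfold TT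
  simp only [Finset.sum_sigma']
  refine le_trans ?_ (ENNReal.Lp_add_le (e.sigma ω) (fun p => ‖a p.1 p.2‖ₑ)
    (fun p => ‖b p.1 p.2‖ₑ) (p := 2) (by norm_num))
  gcongr
  exact enorm_add_le _ _

/-- Partial coefficient. -/
noncomputable def gg (φ : ℕ → ℝ → ℂ) (f : ℝ → ℝ → ℂ) (m : ℕ) (y : ℝ) : ℂ :=
  ∫ x, f x y * (starRingEnd ℂ) (φ m x) ∂mu01

lemma gg_meas (φ : ℕ → ℝ → ℂ) (hm : ∀ m, Measurable (φ m)) (f : ℝ → ℝ → ℂ)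
    (hf : Measurable (Function.uncurry f)) (m : ℕ) : StronglyMeasurable (gg φ f m) := by
  have : Measurable (fun z : ℝ × ℝ => f z.1 z.2 * (starRingEnd ℂ) (φ m z.1)) := by
    have h1 : Measurable (fun z : ℝ × ℝ => f z.1 z.2) := hf
    have h2 : Measurable (fun z : ℝ × ℝ => (starRingEnd ℂ) (φ m z.1)) :=
      RCLike.continuous_conj.measurable.comp ((hm m).comp measurable_fst)
    exact h1.mul h2
  exact this.stronglyMeasurable.integral_prod_left' (μ := mu01)

lemma coeff_eq (φ ψ : ℕ → ℝ → ℂ) (f : ℝ → ℝ → ℂ) (i j : ℕ) :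
    coeff φ ψ f i j = ∫ y, gg φ f i y * (starRingEnd ℂ) (ψ j y) ∂mu01 := by
  unfold coeff gg
  simp only [integral_mul_const]

lemma enorm_int_le (φ : ℕ → ℝ → ℂ) (M : ℝ)
    (hbd : ∀ m, ∀ x ∈ Icc (0:ℝ) 1, ‖φ m x‖ ≤ M) (h : ℝ → ℂ) (m : ℕ) :
    ‖∫ x, h x * (starRingEnd ℂ) (φ m x) ∂mu01‖ₑ
      ≤ ENNReal.ofReal (max 1 M) * ∫⁻ x, ‖h x‖ₑ ∂mu01 := by
  rw [← lintegral_const_mul' _ _ ENNReal.ofReal_ne_top]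
  refine (enorm_integral_le_lintegral_enorm _).trans ?_
  refine lintegral_mono_ae ((ae_restrict_iff' measurableSet_Icc).2
    (Filter.Eventually.of_forall fun x hx => ?_))
  rw [enorm_mul, mul_comm]
  gcongr
  rw [← ofReal_norm]
  apply ENNReal.ofReal_le_ofReal
  simpa using Or.inr (hbd m x hx)

lemma norm11 (f : ℝ → ℝ → ℂ) : mixedNorm 1 1 f = ∫⁻ y, ∫⁻ x, ‖f x y‖ₑ ∂mu01 ∂mu01 := by
  simp [mixedNorm, enorm_eq_nnnorm]
lemma norm21 (f : ℝ → ℝ → ℂ) :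
    mixedNorm 2 1 f = ∫⁻ y, (∫⁻ x, ‖f x y‖ₑ ^ (2:ℝ) ∂mu01) ^ ((1:ℝ)/2) ∂mu01 := by
  simp [mixedNorm, enorm_eq_nnnorm]
lemma norm12 (f : ℝ → ℝ → ℂ) :
    mixedNorm 1 2 f = (∫⁻ y, (∫⁻ x, ‖f x y‖ₑ ∂mu01) ^ (2:ℝ) ∂mu01) ^ ((1:ℝ)/2) := by
  simp [mixedNorm, enorm_eq_nnnorm]
lemma norm22 (f : ℝ → ℝ → ℂ) :
    mixedNorm 2 2 f = (∫⁻ y, ∫⁻ x, ‖f x y‖ₑ ^ (2:ℝ) ∂mu01 ∂mu01) ^ ((1:ℝ)/2) := by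
  simp [mixedNorm, enorm_eq_nnnorm]

lemma le_of_sq_bound (S c X : ℝ≥0∞) (h : S ≤ c ^ (2:ℝ) * X) :
    S ^ ((1:ℝ)/2) ≤ c * X ^ ((1:ℝ)/2) := by
  have h2 := ENNReal.rpow_le_rpow h (z := (1:ℝ)/2) (by norm_num)
  rwa [ENNReal.mul_rpow_of_nonneg _ _ (by norm_num), ← ENNReal.rpow_mul,
    show (2:ℝ) * (1/2) = 1 by norm_num, ENNReal.rpow_one] at h2

lemma sq_half (X : ℝ≥0∞) : (X ^ (2:ℝ)) ^ ((1:ℝ)/2) = X := by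
  rw [← ENNReal.rpow_mul, show (2:ℝ) * (1/2) = 1 by norm_num, ENNReal.rpow_one]

section main
variable (φ ψ : ℕ → ℝ → ℂ) (M₁ M₂ : ℝ)
    (hφm : ∀ m, Measurable (φ m)) (hψm : ∀ m, Measurable (ψ m))
    (hφ : OrthonormalOn01 φ) (hψ : OrthonormalOn01 ψ)
    (hφbd : ∀ m, ∀ x ∈ Icc (0:ℝ) 1, ‖φ m x‖ ≤ M₁)
    (hψbd : ∀ m, ∀ x ∈ Icc (0:ℝ) 1, ‖ψ m x‖ ≤ M₂)
    (f : ℝ → ℝ → ℂ) (hf : Measurable (Function.uncurry f))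
    (e : Finset ℕ) (ω : ℕ → Finset ℕ) (N : ℕ) (hω : ∀ m ∈ e, (ω m).card = N)

lemma meas_slice (f : ℝ → ℝ → ℂ) (hf : Measurable (Function.uncurry f)) (y : ℝ) :
    Measurable (fun x => f x y) :=
  hf.comp (measurable_id.prodMk measurable_const)

lemma meas_inner (f : ℝ → ℝ → ℂ) (hf : Measurable (Function.uncurry f)) :
    Measurable (fun y => ∫⁻ x, ‖f x y‖ₑ ∂mu01) :=
  Measurable.lintegral_prod_left' (f := fun z : ℝ × ℝ => ‖f z.1 z.2‖ₑ) (hf.enorm)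

lemma le_coeff_aux (hψbd : ∀ m, ∀ x ∈ Icc (0:ℝ) 1, ‖ψ m x‖ ≤ M₂) (i j : ℕ) :
    ‖coeff φ ψ f i j‖ₑ ≤ ENNReal.ofReal (max 1 M₂) * ∫⁻ y, ‖gg φ f i y‖ₑ ∂mu01 := by
  rw [coeff_eq]; exact enorm_int_le ψ M₂ hψbd _ j

include hφbd hψbd hω in
lemma T00 : TT e ω (coeff φ ψ f) ≤
    ENNReal.ofReal (max 1 M₁) * ENNReal.ofReal (max 1 M₂) *
      (((e.card : ℝ≥0∞) * N) ^ ((1:ℝ)/2) * mixedNorm 1 1 f) := by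
  set C₁ := ENNReal.ofReal (max 1 M₁)
  set C₂ := ENNReal.ofReal (max 1 M₂)
  have hb : ∀ i j, ‖coeff φ ψ f i j‖ₑ ≤ C₁ * C₂ * mixedNorm 1 1 f := by
    intro i j
    refine (le_coeff_aux φ ψ M₂ f hψbd i j).trans ?_
    rw [norm11, mul_comm C₁, mul_assoc]
    refine mul_le_mul_right ?_ C₂
    rw [← lintegral_const_mul' _ _ ENNReal.ofReal_ne_top]
    refine lintegral_mono fun y => ?_
    exact enorm_int_le φ M₁ hφbd (fun x => f x y) i
  have : TT e ω (coeff φ ψ f) ≤ (C₁ * C₂ * mixedNorm 1 1 f) * ((e.card : ℝ≥0∞) * N) ^ ((1:ℝ)/2) := by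
    refine le_of_sq_bound _ _ _ ?_
    calc _ ≤ ∑ i ∈ e, ∑ j ∈ ω i, (C₁ * C₂ * mixedNorm 1 1 f) ^ (2:ℝ) := by
          gcongr; exact hb _ _
      _ = ∑ i ∈ e, (N : ℝ≥0∞) * (C₁ * C₂ * mixedNorm 1 1 f) ^ (2:ℝ) := by
          refine Finset.sum_congr rfl fun i hi => ?_
          rw [Finset.sum_const, hω i hi, nsmul_eq_mul]
      _ = _ := by rw [Finset.sum_const, nsmul_eq_mul]; ring
  refine this.trans (le_of_eq (by ring))

include hφm hφ hφbd hψbd hω hf in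
lemma T10 : TT e ω (coeff φ ψ f) ≤
    ENNReal.ofReal (max 1 M₂) * ((N : ℝ≥0∞) ^ ((1:ℝ)/2) * mixedNorm 2 1 f) := by
  set C₂ := ENNReal.ofReal (max 1 M₂)
  set A : ℕ → ℝ≥0∞ := fun i => ∫⁻ y, ‖gg φ f i y‖ₑ ∂mu01 with hA
  have h1 : TT e ω (coeff φ ψ f) ≤ C₂ * ((N : ℝ≥0∞) * ∑ i ∈ e, A i ^ (2:ℝ)) ^ ((1:ℝ)/2) := by
    refine le_of_sq_bound _ _ _ ?_
    calc _ ≤ ∑ i ∈ e, ∑ j ∈ ω i, (C₂ * A i) ^ (2:ℝ) := by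
          gcongr; exact le_coeff_aux φ ψ M₂ f hψbd _ _
      _ = ∑ i ∈ e, (C₂ ^ (2:ℝ) * N) * A i ^ (2:ℝ) := by
          refine Finset.sum_congr rfl fun i hi => ?_
          rw [Finset.sum_const, hω i hi, nsmul_eq_mul,
            ENNReal.mul_rpow_of_nonneg _ _ (by norm_num)]; ring
      _ = _ := by rw [← Finset.mul_sum, mul_assoc]
  refine h1.trans ?_
  rw [ENNReal.mul_rpow_of_nonneg _ _ (by norm_num : (0:ℝ) ≤ 1/2)]
  gcongr
  refine (aux_mink e (fun i y => ‖gg φ f i y‖ₑ)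
    (fun i => (gg_meas φ hφm f hf i).measurable.enorm)).trans ?_
  rw [norm21]
  gcongr with y
  exact aux_bessel φ M₁ hφm hφ hφbd e (fun x => f x y)
    (meas_slice f hf y).aestronglyMeasurable

include hφm hψm hψ hψbd hf in
lemma T_bessel₂ : TT e ω (coeff φ ψ f) ≤
    (∑ i ∈ e, ∫⁻ y, ‖gg φ f i y‖ₑ ^ (2:ℝ) ∂mu01) ^ ((1:ℝ)/2) := by
  unfold TT
  gcongr with i hi
  simp only [coeff_eq]
  exact aux_bessel ψ M₂ hψm hψ hψbd (ω i) (gg φ f i) (gg_meas φ hφm f hf i).aestronglyMeasurable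

include hφm hψm hψ hφbd hψbd hf in
lemma T01 : TT e ω (coeff φ ψ f) ≤
    ENNReal.ofReal (max 1 M₁) * ((e.card : ℝ≥0∞) ^ ((1:ℝ)/2) * mixedNorm 1 2 f) := by
  refine (T_bessel₂ φ ψ M₂ hφm hψm hψ hψbd f hf e ω).trans ?_
  rw [norm12, ← ENNReal.mul_rpow_of_nonneg _ _ (by norm_num : (0:ℝ) ≤ 1/2)]
  refine le_of_sq_bound _ _ _ ?_
  calc _ ≤ ∑ i ∈ e, ENNReal.ofReal (max 1 M₁) ^ (2:ℝ) *
        ∫⁻ y, (∫⁻ x, ‖f x y‖ₑ ∂mu01) ^ (2:ℝ) ∂mu01 := by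
        gcongr with i hi
        rw [← lintegral_const_mul' _ _
          (ENNReal.rpow_ne_top_of_nonneg (by norm_num) ENNReal.ofReal_ne_top)]
        gcongr with y
        rw [← ENNReal.mul_rpow_of_nonneg _ _ (by norm_num : (0:ℝ) ≤ 2)]
        gcongr
        exact enorm_int_le φ M₁ hφbd (fun x => f x y) i
    _ = _ := by rw [Finset.sum_const, nsmul_eq_mul]; ring

include hφm hψm hφ hψ hφbd hψbd hf in
lemma T11 : TT e ω (coeff φ ψ f) ≤ mixedNorm 2 2 f := by
  refine (T_bessel₂ φ ψ M₂ hφm hψm hψ hψbd f hf e ω).trans ?_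
  rw [norm22, ← lintegral_finsetSum _
    (fun i _ => ((gg_meas φ hφm f hf i).measurable.enorm.pow_const _))]
  gcongr with y
  exact aux_bessel φ M₁ hφm hφ hφbd e (fun x => f x y)
    (meas_slice f hf y).aestronglyMeasurable

lemma integrable_of_norm11 (f : ℝ → ℝ → ℂ) (hf : Measurable (Function.uncurry f))
    (h : mixedNorm 1 1 f ≠ ⊤) : Integrable (Function.uncurry f) (mu01.prod mu01) := by
  refine ⟨hf.aestronglyMeasurable, ?_⟩
  rw [HasFiniteIntegral, lintegral_prod_symm' _ hf.enorm]
  rw [norm11] at h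
  exact lt_top_iff_ne_top.2 h

lemma norm11_le_21 (f : ℝ → ℝ → ℂ) (hf : Measurable (Function.uncurry f)) :
    mixedNorm 1 1 f ≤ mixedNorm 2 1 f := by
  rw [norm11, norm21]
  gcongr with y
  exact aux_cs _ (meas_slice f hf y).enorm.aemeasurable

lemma norm11_le_12 (f : ℝ → ℝ → ℂ) (hf : Measurable (Function.uncurry f)) :
    mixedNorm 1 1 f ≤ mixedNorm 1 2 f := by
  rw [norm11, norm12]
  exact aux_cs _ (meas_inner f hf).aemeasurable

lemma norm11_le_22 (f : ℝ → ℝ → ℂ) (hf : Measurable (Function.uncurry f)) :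
    mixedNorm 1 1 f ≤ mixedNorm 2 2 f := by
  refine (norm11_le_12 f hf).trans ?_
  rw [norm12, norm22]
  gcongr with y
  have := ENNReal.rpow_le_rpow (aux_cs _ (meas_slice f hf y).enorm.aemeasurable)
    (z := 2) (by norm_num)
  rwa [← ENNReal.rpow_mul, show (1/2:ℝ) * 2 = 1 by norm_num, ENNReal.rpow_one] at this

include hφm hψm hφbd hψbd in
lemma integrable_F (h : Integrable (Function.uncurry f) (mu01.prod mu01)) (i j : ℕ) :
    Integrable (fun z : ℝ × ℝ => f z.1 z.2 * (starRingEnd ℂ) (φ i z.1) *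
      (starRingEnd ℂ) (ψ j z.2)) (mu01.prod mu01) := by
  have hae : ∀ᵐ z ∂(mu01.prod mu01), z ∈ Icc (0:ℝ) 1 ×ˢ Icc (0:ℝ) 1 := by
    rw [Measure.prod_restrict]
    exact ae_restrict_mem (measurableSet_Icc.prod measurableSet_Icc)
  have h1 : Measurable (fun z : ℝ × ℝ => (starRingEnd ℂ) (φ i z.1)) :=
    RCLike.continuous_conj.measurable.comp ((hφm i).comp measurable_fst)
  have h2 : Measurable (fun z : ℝ × ℝ => (starRingEnd ℂ) (ψ j z.2)) :=
    RCLike.continuous_conj.measurable.comp ((hψm j).comp measurable_snd)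
  refine (Integrable.mul_bdd (c := M₁) h h1.aestronglyMeasurable ?_).mul_bdd (c := M₂)
    h2.aestronglyMeasurable ?_
  · filter_upwards [hae] with z hz
    simpa using hφbd i z.1 hz.1
  · filter_upwards [hae] with z hz
    simpa using hψbd j z.2 hz.2

include hφm hψm hφbd hψbd in
lemma coeff_prod (h : Integrable (Function.uncurry f) (mu01.prod mu01)) (i j : ℕ) :
    coeff φ ψ f i j = ∫ z, f z.1 z.2 * (starRingEnd ℂ) (φ i z.1) *
      (starRingEnd ℂ) (ψ j z.2) ∂(mu01.prod mu01) := by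
  rw [integral_prod_symm _ (integrable_F φ ψ M₁ M₂ hφm hψm hφbd hψbd f h i j)]
  rfl

include hφm hψm hφbd hψbd in
lemma coeff_add (g : ℝ → ℝ → ℂ) (h : Integrable (Function.uncurry f) (mu01.prod mu01))
    (h' : Integrable (Function.uncurry g) (mu01.prod mu01)) :
    coeff φ ψ (fun x y => f x y + g x y) =
      fun i j => coeff φ ψ f i j + coeff φ ψ g i j := by
  funext i j
  have h3 : Integrable (Function.uncurry (fun x y => f x y + g x y)) (mu01.prod mu01) := h.add h'
  rw [coeff_prod φ ψ M₁ M₂ hφm hψm hφbd hψbd _ h3, coeff_prod φ ψ M₁ M₂ hφm hψm hφbd hψbd _ h,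
    coeff_prod φ ψ M₁ M₂ hφm hψm hφbd hψbd _ h', ← integral_add
      (integrable_F φ ψ M₁ M₂ hφm hψm hφbd hψbd f h i j)
      (integrable_F φ ψ M₁ M₂ hφm hψm hφbd hψbd g h' i j)]
  congr 1
  funext z
  ring

end main

/-- K-functional estimate for the coefficient sums:
`S(N₁,N₂) ≤ 2 max(1,M₁) max(1,M₂) ·
  inf { (N₁N₂)^{1/2}‖f₀₀‖_{(1,1)} + N₂^{1/2}‖f₁₀‖_{(2,1)} + N₁^{1/2}‖f₀₁‖_{(1,2)} + ‖f₁₁‖_{(2,2)} }`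
over decompositions `f = f₀₀ + f₁₀ + f₀₁ + f₁₁`. -/
theorem stmt_11 (φ ψ : ℕ → ℝ → ℂ) (M₁ M₂ : ℝ)
    (hφm : ∀ m, Measurable (φ m)) (hψm : ∀ m, Measurable (ψ m))
    (hφ : OrthonormalOn01 φ) (hψ : OrthonormalOn01 ψ)
    (hφbd : ∀ m, ∀ x ∈ Icc (0:ℝ) 1, ‖φ m x‖ ≤ M₁)
    (hψbd : ∀ m, ∀ x ∈ Icc (0:ℝ) 1, ‖ψ m x‖ ≤ M₂)
    (f : ℝ → ℝ → ℂ)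
    (hfint : IntegrableOn (Function.uncurry f) (Icc (0:ℝ) 1 ×ˢ Icc (0:ℝ) 1))
    (N₁ N₂ : ℕ) :
    Ssup (coeff φ ψ f) N₁ N₂ ≤
      ENNReal.ofReal (2 * max 1 M₁ * max 1 M₂) *
        sInf {v : ℝ≥0∞ | ∃ f00 f10 f01 f11 : ℝ → ℝ → ℂ,
          Measurable (Function.uncurry f00) ∧ Measurable (Function.uncurry f10) ∧
          Measurable (Function.uncurry f01) ∧ Measurable (Function.uncurry f11) ∧
          (∀ x₁ x₂ : ℝ, f x₁ x₂ = f00 x₁ x₂ + f10 x₁ x₂ + f01 x₁ x₂ + f11 x₁ x₂) ∧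
          mixedNorm 1 1 f00 ≠ ⊤ ∧ mixedNorm 2 1 f10 ≠ ⊤ ∧
          mixedNorm 1 2 f01 ≠ ⊤ ∧ mixedNorm 2 2 f11 ≠ ⊤ ∧
          v = ((N₁ : ℝ≥0∞) * (N₂ : ℝ≥0∞)) ^ ((1:ℝ)/2) * mixedNorm 1 1 f00
              + (N₂ : ℝ≥0∞) ^ ((1:ℝ)/2) * mixedNorm 2 1 f10
              + (N₁ : ℝ≥0∞) ^ ((1:ℝ)/2) * mixedNorm 1 2 f01
              + mixedNorm 2 2 f11} := by
  set C := ENNReal.ofReal (2 * max 1 M₁ * max 1 M₂) with hC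
  set C₁ := ENNReal.ofReal (max 1 M₁) with hC₁
  set C₂ := ENNReal.ofReal (max 1 M₂) with hC₂
  have p1 : (0:ℝ) < max 1 M₁ := lt_of_lt_of_le one_pos (le_max_left _ _)
  have p2 : (0:ℝ) < max 1 M₂ := lt_of_lt_of_le one_pos (le_max_left _ _)
  have one1 : 1 ≤ C₁ := by rw [hC₁, ENNReal.one_le_ofReal]; exact le_max_left _ _
  have one2 : 1 ≤ C₂ := by rw [hC₂, ENNReal.one_le_ofReal]; exact le_max_left _ _
  have hCC : C₁ * C₂ ≤ C := by
    rw [hC₁, hC₂, hC, ← ENNReal.ofReal_mul p1.le]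
    apply ENNReal.ofReal_le_ofReal
    have := mul_pos p1 p2
    linarith
  have hC0 : C ≠ 0 := by
    rw [hC]; simp only [ne_eq, ENNReal.ofReal_eq_zero, not_le]; positivity
  have hc1 : C₁ ≤ C := le_trans (le_mul_of_one_le_right zero_le one2) hCC
  have hc2 : C₂ ≤ C := le_trans (le_mul_of_one_le_left zero_le one1) hCC
  have hc : 1 ≤ C := one1.trans hc1
  rw [← ENNReal.div_le_iff' hC0 ENNReal.ofReal_ne_top]
  refine le_sInf ?_
  rintro v ⟨f00, f10, f01, f11, m00, m10, m01, m11, hsum, n00, n10, n01, n11, rfl⟩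
  rw [ENNReal.div_le_iff' hC0 ENNReal.ofReal_ne_top]
  refine iSup_le fun e => iSup_le fun he => iSup_le fun ω => iSup_le fun hω => ?_
  change TT e ω (coeff φ ψ f) ≤ _
  have i00 := integrable_of_norm11 f00 m00 n00
  have i10 := integrable_of_norm11 f10 m10 (ne_top_of_le_ne_top n10 (norm11_le_21 f10 m10))
  have i01 := integrable_of_norm11 f01 m01 (ne_top_of_le_ne_top n01 (norm11_le_12 f01 m01))
  have i11 := integrable_of_norm11 f11 m11 (ne_top_of_le_ne_top n11 (norm11_le_22 f11 m11))
  have hfe : f = fun x y => (fun x y => (fun x y => f00 x y + f10 x y) x y + f01 x y) x y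
      + f11 x y := by
    funext x y; exact hsum x y
  have ia : Integrable (Function.uncurry (fun x y => f00 x y + f10 x y)) (mu01.prod mu01) :=
    i00.add i10
  have ib : Integrable (Function.uncurry
      (fun x y => (fun x y => f00 x y + f10 x y) x y + f01 x y)) (mu01.prod mu01) :=
    ia.add i01
  rw [hfe, coeff_add φ ψ M₁ M₂ hφm hψm hφbd hψbd _ _ ib i11]
  refine (TT_add _ _ _ _).trans ?_
  rw [mul_add, mul_add, mul_add]
  refine add_le_add ?_ ?_
  swap
  · exact (T11 φ ψ M₁ M₂ hφm hψm hφ hψ hφbd hψbd f11 m11 e ω).trans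
      (le_mul_of_one_le_left zero_le hc)
  rw [coeff_add φ ψ M₁ M₂ hφm hψm hφbd hψbd _ _ ia i01]
  refine (TT_add _ _ _ _).trans ?_
  refine add_le_add ?_ ?_
  swap
  · refine (T01 φ ψ M₁ M₂ hφm hψm hψ hφbd hψbd f01 m01 e ω).trans ?_
    rw [he]; gcongr
  rw [coeff_add φ ψ M₁ M₂ hφm hψm hφbd hψbd _ _ i00 i10]
  refine (TT_add _ _ _ _).trans ?_
  refine add_le_add ?_ ?_
  · refine (T00 φ ψ M₁ M₂ hφbd hψbd f00 e ω N₂ hω).trans ?_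
    rw [he]; gcongr
  · refine (T10 φ ψ M₁ M₂ hφm hφ hφbd hψbd f10 m10 e ω N₂ hω).trans ?_
    gcongr
end
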